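/- arXiv:2407.11932 — 3 statements merged into one kernel-verified Lean document; each statement's English description precedes it below -/
import Mathlib

section
/- For every constant c > 0 there is a constant D = D(c) > 0 with the following property. Let n, d be positive integers and p ∈ (0, 1). On a probability space, let Z be a random n×d real matrix with i.i.d. N(0, 1/d) entries, let X := Z Zᵀ, let U be a random variable independent of Z, let A := F(Z, U) be a measurable function of (Z, U) taking values in symmetric {0,1}-valued n×n matrices with zero diagonal (the adjacency matrix of a graph on n vertices) such that the average edge density satisfies Σ_{1 ≤ i < j ≤ n} E[A_{ij}] = (n choose 2)·p, and let X̂ := f(A) for a measurable function f valued in n×n real matrices. If d ≥ c · n · h(p), then E[L(X, X̂)] ≥ D. -/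
open MeasureTheory ProbabilityTheory Matrix

noncomputable section

/-- Matrices form a measurable space via the product σ-algebra on functions. -/
instance matrixMeasurableSpace {m n α : Type*} [MeasurableSpace α] :
    MeasurableSpace (Matrix m n α) :=
  inferInstanceAs (MeasurableSpace (m → n → α))

open Classical in
/-- Kullback–Leibler divergence `KL(μ ‖ ν)`, valued in extended reals:
`∫ log (dμ/dν) dμ` when `μ ≪ ν` and the log-likelihood ratio is integrable, `⊤` otherwise. -/
def klDiv {α : Type*} [MeasurableSpace α] (μ ν : Measure α) : EReal :=
  if μ ≪ ν ∧ Integrable (llr μ ν) μ then ((∫ x, llr μ ν x ∂μ : ℝ) : EReal) else ⊤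

/-- Mutual information of a coupling: KL divergence to the product of its marginals. -/
def mutualInfo {α β : Type*} [MeasurableSpace α] [MeasurableSpace β]
    (ρ : Measure (α × β)) : EReal :=
  klDiv ρ (ρ.fst.prod ρ.snd)

/-- Law of an `n × d` random matrix with i.i.d. `N(0, 1/d)` entries. -/
def gaussianMatrix (n d : ℕ) : Measure (Matrix (Fin n) (Fin d) ℝ) :=
  Measure.pi fun _ : Fin n => Measure.pi fun _ : Fin d => gaussianReal 0 (d : NNReal)⁻¹

/-- Law of the normalized Wishart matrix `X = Z Zᵀ` with `Z` an i.i.d. `N(0,1/d)` matrix. -/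
def wishartLaw (n d : ℕ) : Measure (Matrix (Fin n) (Fin n) ℝ) :=
  (gaussianMatrix n d).map fun Z => Z * Zᵀ

/-- Squared Frobenius distance `‖A − B‖_F²`. -/
def frobSq {n m : ℕ} (A B : Matrix (Fin n) (Fin m) ℝ) : ℝ :=
  ∑ i, ∑ j, (A i j - B i j) ^ 2

/-- The loss `L(X, X̂) = (d/(n(n+1))) ‖X − X̂‖_F²`. -/
def lossL (n d : ℕ) (X Y : Matrix (Fin n) (Fin n) ℝ) : ℝ :=
  (d / (n * (n + 1))) * frobSq X Y

/-- The loss `ℓ(Z, Ẑ) = (1/n) inf_{O ∈ O(d)} ‖Z − Ẑ O‖_F²`. -/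
def lossEll (n d : ℕ) (A B : Matrix (Fin n) (Fin d) ℝ) : ℝ :=
  (1 / n) * ⨅ O ∈ Matrix.orthogonalGroup (Fin d) ℝ, frobSq A (B * O)

/-- Standard Gaussian on `ℝ^d`. -/
def stdGaussianPi (d : ℕ) : Measure (Fin d → ℝ) :=
  Measure.pi fun _ : Fin d => gaussianReal 0 1

/-- The uniform (normalized rotation-invariant) probability measure on the unit sphere
`S^{d-1} ⊆ ℝ^d`, realized as the pushforward of the standard Gaussian under
radial normalization `x ↦ x / ‖x‖₂`. -/
def sphereUniform (d : ℕ) : Measure (Fin d → ℝ) :=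
  (stdGaussianPi d).map fun x => (Real.sqrt (∑ j, x j ^ 2))⁻¹ • x

/-- Law of an `n × d` random matrix with i.i.d. rows uniform on the unit sphere. -/
def sphereMatrix (n d : ℕ) : Measure (Matrix (Fin n) (Fin d) ℝ) :=
  Measure.pi fun _ : Fin n => sphereUniform d

/-- Law of `X = Z Zᵀ` with the rows of `Z` i.i.d. uniform on the unit sphere. -/
def sphereWishartLaw (n d : ℕ) : Measure (Matrix (Fin n) (Fin n) ℝ) :=
  (sphereMatrix n d).map fun Z => Z * Zᵀ

/-!
Split the vertices into two halves. Given the rows `B` of `√d • Z` in one half, the remaining rows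
are independent standard Gaussian vectors, and the cross block of the Gram matrix is their image
under `B`. For a fixed guess `M` of this block, a Gaussian integral therefore bounds
`𝔼[exp (-l * ‖block - M‖²) | B]` by a product of factors `(1 + 2 * l * x) ^ (-1 / 2)`, one for each
row and each eigenvalue `x` of `Bᵀ * B`; the moments of a Wishart matrix show that about
`min n d` of these eigenvalues have order `max n d`.

The estimator only guesses among the values `f G`. Weighting the bounds by the law of the
Erdős–Rényi graph `G(n, p)` and applying Jensen's inequality costs `-𝔼[log ℙ(G(n, p) = A)]`, and
the edge density of `A` makes this exactly `n.choose 2 * h(p)`. For `d ≥ c * n * h(p)` the Gaussian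
gain, of order `n * min n d * log (l * max n d)`, exceeds this cost once `l` is a large multiple of
`1 / max n d`, so that `l` times the squared error must make up for the difference.
-/

open scoped ENNReal

theorem lintegral_pi_prod {ι : Type*} [Fintype ι] {Ω : ι → Type*} [∀ i, MeasurableSpace (Ω i)]
    (μ : ∀ i, Measure (Ω i)) [∀ i, IsProbabilityMeasure (μ i)] {f : ∀ i, Ω i → ℝ≥0∞}
    (hf : ∀ i, Measurable (f i)) :
    ∫⁻ x, ∏ i, f i (x i) ∂Measure.pi μ = ∏ i, ∫⁻ x, f i x ∂μ i := by
  rw [lintegral_prod_eq_prod_lintegral_of_indepFun .univ (fun i (x : ∀ i, Ω i) ↦ f i (x i))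
    (iIndepFun_pi fun i ↦ (hf i).aemeasurable) fun i ↦ (hf i).comp (measurable_pi_apply i)]
  exact Finset.prod_congr rfl fun i _ ↦ (measurePreserving_eval μ i).lintegral_comp (hf i)

theorem gaussianPDFReal_mul_exp_neg_sq_le {l : ℝ} (hl : 0 ≤ l) (s m : ℝ) :
    ∃ x₀ : ℝ, ∀ x, gaussianPDFReal 0 1 x * Real.exp (-(l * (s * x - m) ^ 2)) ≤
      (√(1 + 2 * l * s ^ 2))⁻¹ * gaussianPDFReal x₀ (1 + 2 * l * s ^ 2).toNNReal⁻¹ x := by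
  set a := 1 + 2 * l * s ^ 2 with ha
  have ha_pos : 0 < a := by positivity
  set x₀ := 2 * l * s * m / a with hx₀
  have complete_square (x : ℝ) : a * (x - x₀) ^ 2 ≤ x ^ 2 + 2 * (l * (s * x - m) ^ 2) := by
    have h : x ^ 2 + 2 * (l * (s * x - m) ^ 2) - a * (x - x₀) ^ 2 = 2 * l * m ^ 2 / a := by
      rw [hx₀]
      field_simp
      rw [ha]
      ring
    have : 0 ≤ 2 * l * m ^ 2 / a := by positivity
    linarith
  refine ⟨x₀, fun x ↦ ?_⟩
  have h_const : (√a)⁻¹ * (√(2 * Real.pi * a⁻¹))⁻¹ = (√(2 * Real.pi))⁻¹ := by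
    rw [← mul_inv, ← Real.sqrt_mul ha_pos.le, mul_left_comm, mul_inv_cancel₀ ha_pos.ne', mul_one]
  have h_exp : (x - x₀) ^ 2 / (2 * a⁻¹) = a * (x - x₀) ^ 2 / 2 := by field_simp
  simp only [gaussianPDFReal, NNReal.coe_inv, Real.coe_toNNReal _ ha_pos.le, NNReal.coe_one,
    mul_one, sub_zero, ← mul_assoc, h_const]
  rw [mul_assoc, ← Real.exp_add, neg_div, neg_div, h_exp]
  gcongr
  linarith [complete_square x]

theorem lintegral_exp_neg_sq_gaussianReal_le {l : ℝ} (hl : 0 ≤ l) (s m : ℝ) :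
    ∫⁻ x, .ofReal (Real.exp (-(l * (s * x - m) ^ 2))) ∂gaussianReal 0 1 ≤
      .ofReal (√(1 + 2 * l * s ^ 2))⁻¹ := by
  obtain ⟨x₀, hx₀⟩ := gaussianPDFReal_mul_exp_neg_sq_le hl s m
  have hv : (1 + 2 * l * s ^ 2).toNNReal⁻¹ ≠ 0 :=
    inv_ne_zero (Real.toNNReal_pos.2 (by positivity)).ne'
  rw [gaussianReal_of_var_ne_zero _ one_ne_zero,
    lintegral_withDensity_eq_lintegral_mul _ (measurable_gaussianPDF 0 1) (by fun_prop)]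
  calc _ ≤ ∫⁻ x, .ofReal (√(1 + 2 * l * s ^ 2))⁻¹ *
          gaussianPDF x₀ (1 + 2 * l * s ^ 2).toNNReal⁻¹ x := by
        refine lintegral_mono fun x ↦ ?_
        simp only [Pi.mul_apply, gaussianPDF, ← ENNReal.ofReal_mul (gaussianPDFReal_nonneg ..),
          ← ENNReal.ofReal_mul (inv_nonneg.2 (Real.sqrt_nonneg _))]
        exact ENNReal.ofReal_le_ofReal (hx₀ x)
    _ = _ := by
        rw [lintegral_const_mul _ (measurable_gaussianPDF _ _),
          lintegral_gaussianPDF_eq_one _ hv, mul_one]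

section OrthogonalFamily

variable {ι F : Type*} [Fintype ι] [NormedAddCommGroup F] [InnerProductSpace ℝ F]

theorem norm_sum_smul_sq_of_orthogonal {u : ι → F} (hu : Pairwise fun i j ↦ inner ℝ (u i) (u j) = 0)
    (y : ι → ℝ) : ‖∑ i, y i • u i‖ ^ 2 = ∑ i, (‖u i‖ * y i) ^ 2 := by
  rw [← real_inner_self_eq_norm_sq, sum_inner]
  refine Finset.sum_congr rfl fun i _ ↦ ?_
  rw [inner_sum, Finset.sum_eq_single i (fun j _ hji ↦ by
    rw [real_inner_smul_left, real_inner_smul_right, hu hji.symm, mul_zero, mul_zero]) (by simp),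
    real_inner_self_eq_norm_sq, norm_smul, mul_comm, mul_pow, mul_pow, Real.norm_eq_abs, sq_abs]

theorem exists_sum_sq_le_norm_sub_sq {u : ι → F}
    (hu : Pairwise fun i j ↦ inner ℝ (u i) (u j) = 0) (w : F) :
    ∃ m : ι → ℝ, ∀ y : ι → ℝ, ∑ i, (‖u i‖ * y i - m i) ^ 2 ≤ ‖∑ i, y i • u i - w‖ ^ 2 := by
  set m : ι → ℝ := fun i ↦ inner ℝ (u i) w / ‖u i‖ with hm
  have h_inner (i : ι) : ‖u i‖ * m i = inner ℝ (u i) w := by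
    rcases eq_or_ne (u i) 0 with h | h
    · simp [h]
    · simp only [hm]
      field_simp
  have h_expand (y : ι → ℝ) : ‖∑ i, y i • u i - w‖ ^ 2 =
      ∑ i, (‖u i‖ * y i - m i) ^ 2 + (‖w‖ ^ 2 - ∑ i, m i ^ 2) := by
    rw [norm_sub_sq_real, norm_sum_smul_sq_of_orthogonal hu, sum_inner]
    simp only [real_inner_smul_left, ← h_inner, sub_sq, Finset.sum_add_distrib,
      Finset.sum_sub_distrib, Finset.mul_sum]
    have : ∑ i, 2 * (y i * (‖u i‖ * m i)) = ∑ i, 2 * (‖u i‖ * y i) * m i :=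
      Finset.sum_congr rfl fun i _ ↦ by ring
    rw [this]
    ring
  -- At the minimizer of the right-hand side only the constant term of `h_expand` survives.
  have bessel : ∑ i, m i ^ 2 ≤ ‖w‖ ^ 2 := by
    have h := h_expand fun i ↦ m i / ‖u i‖
    have h_zero (i : ι) : ‖u i‖ * (m i / ‖u i‖) - m i = 0 := by
      rcases eq_or_ne (u i) 0 with hi | hi
      · simp [hm, hi]
      · field_simp
        ring
    simp only [h_zero, zero_pow two_ne_zero, Finset.sum_const_zero, zero_add] at h
    linarith [sq_nonneg ‖∑ i, (m i / ‖u i‖) • u i - w‖]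
  exact ⟨m, fun y ↦ by rw [h_expand y]; linarith⟩

theorem lintegral_exp_neg_norm_sq_le_of_orthogonal {u : ι → F}
    (hu : Pairwise fun i j ↦ inner ℝ (u i) (u j) = 0) (w : F) {l : ℝ} (hl : 0 ≤ l) :
    ∫⁻ y, .ofReal (Real.exp (-(l * ‖∑ i, y i • u i - w‖ ^ 2)))
        ∂Measure.pi (fun _ : ι ↦ gaussianReal 0 1) ≤
      ∏ i, .ofReal (√(1 + 2 * l * ‖u i‖ ^ 2))⁻¹ := by
  obtain ⟨m, hm⟩ := exists_sum_sq_le_norm_sub_sq hu w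
  calc _ ≤ ∫⁻ y, ∏ i, ENNReal.ofReal (Real.exp (-(l * (‖u i‖ * y i - m i) ^ 2)))
          ∂Measure.pi (fun _ : ι ↦ gaussianReal 0 1) := by
        refine lintegral_mono fun y ↦ ?_
        rw [← ENNReal.ofReal_prod_of_nonneg fun i _ ↦ Real.exp_nonneg _, ← Real.exp_sum,
          Finset.sum_neg_distrib, ← Finset.mul_sum]
        gcongr
        exact hm y
    _ = ∏ i, ∫⁻ x, .ofReal (Real.exp (-(l * (‖u i‖ * x - m i) ^ 2))) ∂gaussianReal 0 1 :=
        lintegral_pi_prod _ (f := fun i x ↦ .ofReal (Real.exp (-(l * (‖u i‖ * x - m i) ^ 2))))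
          fun i ↦ by fun_prop
    _ ≤ _ := Finset.prod_le_prod' fun i _ ↦ lintegral_exp_neg_sq_gaussianReal_le hl _ _

end OrthogonalFamily

/-- The law of a random `J × K` matrix with independent standard normal entries. -/
def stdGaussianMatrix (J K : Type*) [Fintype J] [Fintype K] : Measure (Matrix J K ℝ) :=
  Measure.pi fun _ : J ↦ Measure.pi fun _ : K ↦ gaussianReal 0 1

section SpectralCount

variable {J K : Type*} [Fintype J] [Fintype K]

theorem trace_mul_self_eq_sum_eigenvalues_sq [DecidableEq K] {𝕜 : Type*} [RCLike 𝕜]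
    {G : Matrix K K 𝕜} (hG : G.IsHermitian) :
    (G * G).trace = ∑ k, (hG.eigenvalues k : 𝕜) ^ 2 := by
  conv_lhs => rw [hG.spectral_theorem, ← map_mul, diagonal_mul_diagonal]
  rw [Unitary.conjStarAlgAut_apply, trace_mul_comm, ← mul_assoc,
    Unitary.coe_star_mul_self, one_mul, trace_diagonal]
  simp [pow_two]

theorem lintegral_pi_gaussianReal_eq_orthonormalBasis
    (b : OrthonormalBasis K ℝ (EuclideanSpace ℝ K)) {f : (K → ℝ) → ℝ≥0∞} (hf : Measurable f) :
    ∫⁻ z, f z ∂Measure.pi (fun _ : K ↦ gaussianReal 0 1) =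
      ∫⁻ y, f ⇑(∑ k, y k • b k) ∂Measure.pi (fun _ : K ↦ gaussianReal 0 1) := by
  have h := (map_pi_eq_stdGaussian (ι := K)).trans (stdGaussian_eq_map_pi_orthonormalBasis b)
  calc _ = ∫⁻ x, f x.ofLp ∂(Measure.pi fun _ : K ↦ gaussianReal 0 1).map (WithLp.toLp 2) := by
        rw [lintegral_map (by fun_prop) (by fun_prop)]
    _ = _ := by rw [h, lintegral_map (by fun_prop) (by fun_prop)]

theorem lintegral_exp_neg_mulVec_sub_sq_le [DecidableEq K] {B : Matrix J K ℝ}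
    (hB : (Bᵀ * B).IsHermitian) (m : J → ℝ) {l : ℝ} (hl : 0 ≤ l) :
    ∫⁻ z, .ofReal (Real.exp (-(l * ∑ j, ((B *ᵥ z) j - m j) ^ 2)))
        ∂Measure.pi (fun _ : K ↦ gaussianReal 0 1) ≤
      ∏ k, .ofReal (√(1 + 2 * l * hB.eigenvalues k))⁻¹ := by
  set b := hB.eigenvectorBasis
  set u : K → EuclideanSpace ℝ J := fun k ↦ .toLp 2 (B *ᵥ b k) with hu
  have inner_u (k k' : K) : inner ℝ (u k) (u k') = hB.eigenvalues k' * inner ℝ (b k) (b k') := by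
    simp only [hu, EuclideanSpace.inner_eq_star_dotProduct, star_trivial, dotProduct_mulVec,
      ← mulVec_transpose]
    rw [mulVec_mulVec, hB.mulVec_eigenvectorBasis, smul_dotProduct, smul_eq_mul]
  have norm_u (k : K) : ‖u k‖ ^ 2 = hB.eigenvalues k := by
    rw [← real_inner_self_eq_norm_sq, inner_u, real_inner_self_eq_norm_sq, b.norm_eq_one,
      one_pow, mul_one]
  have orth_u : Pairwise fun k k' ↦ inner ℝ (u k) (u k') = 0 := fun k k' hk ↦ by
    simp only [inner_u, b.inner_eq_zero hk, mul_zero]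
  have mulVec_sum (y : K → ℝ) : ∑ j, ((B *ᵥ ⇑(∑ k, y k • b k)) j - m j) ^ 2 =
      ‖∑ k, y k • u k - .toLp 2 m‖ ^ 2 := by
    rw [EuclideanSpace.real_norm_sq_eq]
    simp [u, mulVec_sum, mulVec_smul]
  rw [lintegral_pi_gaussianReal_eq_orthonormalBasis b (by fun_prop)]
  simp only [mulVec_sum, ← norm_u]
  exact lintegral_exp_neg_norm_sq_le_of_orthogonal orth_u _ hl

/-- The effective number of eigenvalues of the Gram matrix `Bᵀ * B` of order `τ` or larger, bounded
below by a quadratic polynomial: an eigenvalue `x` contributes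
`x / τ - (x / τ) ^ 2 / 4 ≤ min (x / τ) 1`. Written through traces, it has an explicit mean when `B`
is Gaussian. -/
def spectralCount (τ : ℝ) (B : Matrix J K ℝ) : ℝ :=
  (Bᵀ * B).trace / τ - (Bᵀ * B * (Bᵀ * B)).trace / (4 * τ ^ 2)

theorem log_one_add_mul_mul_le {a τ x : ℝ} (ha : 0 ≤ a) (hτ : 0 < τ) (hx : 0 ≤ x) :
    Real.log (1 + a * τ) * (x / τ - x ^ 2 / (4 * τ ^ 2)) ≤ Real.log (1 + a * x) := by
  obtain ⟨u, rfl⟩ : ∃ u, x = u * τ := ⟨x / τ, by field_simp⟩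
  have hu : 0 ≤ u := nonneg_of_mul_nonneg_left hx hτ
  have h_log : 0 ≤ Real.log (1 + a * τ) := Real.log_nonneg (by nlinarith [mul_nonneg ha hτ.le])
  have h_quad : u * τ / τ - (u * τ) ^ 2 / (4 * τ ^ 2) = u - u ^ 2 / 4 := by field_simp
  rw [h_quad]
  rcases le_total u 1 with hu1 | hu1
  · have h_concave := strictConcaveOn_log_Ioi.concaveOn.2 (Set.mem_Ioi.2 one_pos)
      (Set.mem_Ioi.2 (show 0 < 1 + a * τ by positivity)) (sub_nonneg.2 hu1) hu (by ring)
    rw [smul_eq_mul, smul_eq_mul, smul_eq_mul, smul_eq_mul, Real.log_one,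
      show (1 - u) * 1 + u * (1 + a * τ) = 1 + a * (u * τ) by ring] at h_concave
    nlinarith [mul_nonneg h_log (sq_nonneg u)]
  · have h_mono : Real.log (1 + a * τ) ≤ Real.log (1 + a * (u * τ)) := by
      gcongr
      exact le_mul_of_one_le_left hτ.le hu1
    nlinarith [mul_nonneg h_log (sq_nonneg (u - 2))]

theorem prod_inv_sqrt_le_exp_spectralCount [DecidableEq K] {B : Matrix J K ℝ}
    (hB : (Bᵀ * B).IsHermitian) {a τ : ℝ} (ha : 0 ≤ a) (hτ : 0 < τ) :
    ∏ k, (√(1 + a * hB.eigenvalues k))⁻¹ ≤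
      Real.exp (-(Real.log (1 + a * τ) * spectralCount τ B / 2)) := by
  have h_nonneg (k : K) : 0 ≤ hB.eigenvalues k :=
    (posSemidef_conjTranspose_mul_self B).eigenvalues_nonneg k
  have h_sqrt (k : K) : (√(1 + a * hB.eigenvalues k))⁻¹ =
      Real.exp (-(Real.log (1 + a * hB.eigenvalues k) / 2)) := by
    have := h_nonneg k
    rw [Real.exp_neg, ← Real.log_sqrt (by positivity), Real.exp_log (by positivity)]
  have h_count : spectralCount τ B =
      ∑ k, (hB.eigenvalues k / τ - hB.eigenvalues k ^ 2 / (4 * τ ^ 2)) := by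
    rw [spectralCount, trace_mul_self_eq_sum_eigenvalues_sq hB, hB.trace_eq_sum_eigenvalues,
      Finset.sum_sub_distrib, Finset.sum_div, Finset.sum_div]
    rfl
  rw [h_count, Finset.mul_sum, Finset.sum_div, ← Finset.sum_neg_distrib, Real.exp_sum]
  refine Finset.prod_le_prod (fun k _ ↦ by positivity) fun k _ ↦ ?_
  rw [h_sqrt]
  gcongr
  exact log_one_add_mul_mul_le ha hτ (h_nonneg k)

theorem lintegral_exp_neg_mulVec_sub_sq_le_spectralCount (B : Matrix J K ℝ) (m : J → ℝ)
    {l τ : ℝ} (hl : 0 ≤ l) (hτ : 0 < τ) :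
    ∫⁻ z, .ofReal (Real.exp (-(l * ∑ j, ((B *ᵥ z) j - m j) ^ 2)))
        ∂Measure.pi (fun _ : K ↦ gaussianReal 0 1) ≤
      .ofReal (Real.exp (-(Real.log (1 + 2 * l * τ) * spectralCount τ B / 2))) := by
  classical
  have hB : (Bᵀ * B).IsHermitian := isHermitian_conjTranspose_mul_self B
  refine (lintegral_exp_neg_mulVec_sub_sq_le hB m hl).trans ?_
  rw [← ENNReal.ofReal_prod_of_nonneg fun k _ ↦ by positivity]
  exact ENNReal.ofReal_le_ofReal (prod_inv_sqrt_le_exp_spectralCount hB (by positivity) hτ)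

end SpectralCount

section RowBlocks

variable {I J K : Type*} [Fintype I] [Fintype J] [Fintype K]

instance : IsProbabilityMeasure (stdGaussianMatrix J K) :=
  inferInstanceAs <| IsProbabilityMeasure <|
    Measure.pi fun _ : J ↦ Measure.pi fun _ : K ↦ gaussianReal 0 1

theorem measurable_spectralCount (τ : ℝ) :
    Measurable (spectralCount τ : Matrix J K ℝ → ℝ) := by
  unfold spectralCount
  simp only [trace, diag_apply, mul_apply, transpose_apply]
  fun_prop

theorem lintegral_exp_neg_mul_transpose_sub_sq_le (B : Matrix J K ℝ) (M : Matrix I J ℝ) {l τ : ℝ}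
    (hl : 0 ≤ l) (hτ : 0 < τ) :
    ∫⁻ W, .ofReal (Real.exp (-(l * ∑ i, ∑ j, ((W * Bᵀ) i j - M i j) ^ 2))) ∂stdGaussianMatrix I K ≤
      .ofReal (Real.exp
        (-(Fintype.card I * (Real.log (1 + 2 * l * τ) * spectralCount τ B / 2)))) := by
  have h_rows (W : Matrix I K ℝ) :
      ENNReal.ofReal (Real.exp (-(l * ∑ i, ∑ j, ((W * Bᵀ) i j - M i j) ^ 2))) =
        ∏ i, .ofReal (Real.exp (-(l * ∑ j, ((B *ᵥ W i) j - M i j) ^ 2))) := by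
    simp only [← ENNReal.ofReal_prod_of_nonneg fun _ _ ↦ Real.exp_nonneg _, ← Real.exp_sum,
      Finset.sum_neg_distrib, ← Finset.mul_sum, mul_apply, transpose_apply, mulVec, dotProduct,
      mul_comm]
  simp only [h_rows]
  rw [stdGaussianMatrix]
  refine (lintegral_pi_prod (Ω := fun _ : I ↦ K → ℝ) _
    (f := fun i z ↦ .ofReal (Real.exp (-(l * ∑ j, ((B *ᵥ z) j - M i j) ^ 2))))
    fun i ↦ by fun_prop).trans_le ?_
  refine (Finset.prod_le_prod' fun i _ ↦
    lintegral_exp_neg_mulVec_sub_sq_le_spectralCount B (M i) hl hτ).trans_eq ?_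
  rw [Finset.prod_const, Finset.card_univ, ← ENNReal.ofReal_pow (Real.exp_nonneg _),
    ← Real.exp_nat_mul, mul_neg]

theorem lintegral_exp_block_le_one (M : Matrix I J ℝ) {l τ : ℝ} (hl : 0 ≤ l) (hτ : 0 < τ) :
    ∫⁻ q : Matrix I K ℝ × Matrix J K ℝ, .ofReal (Real.exp
        (Fintype.card I * (Real.log (1 + 2 * l * τ) * spectralCount τ q.2 / 2) -
          l * ∑ i, ∑ j, ((q.1 * q.2ᵀ) i j - M i j) ^ 2))
      ∂(stdGaussianMatrix I K).prod (stdGaussianMatrix J K) ≤ 1 := by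
  have h_meas : Measurable fun q : Matrix I K ℝ × Matrix J K ℝ ↦ ENNReal.ofReal (Real.exp
        (Fintype.card I * (Real.log (1 + 2 * l * τ) * spectralCount τ q.2 / 2) -
          l * ∑ i, ∑ j, ((q.1 * q.2ᵀ) i j - M i j) ^ 2)) := by
    have h_count : Measurable fun q : Matrix I K ℝ × Matrix J K ℝ ↦ spectralCount τ q.2 :=
      (measurable_spectralCount τ).comp measurable_snd
    have h_block : Measurable fun q : Matrix I K ℝ × Matrix J K ℝ ↦
        ∑ i, ∑ j, ((q.1 * q.2ᵀ) i j - M i j) ^ 2 := by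
      simp only [mul_apply, transpose_apply]
      fun_prop
    exact ((((h_count.const_mul _).div_const 2).const_mul _).sub
      (h_block.const_mul l)).exp.ennreal_ofReal
  rw [lintegral_prod_symm _ h_meas.aemeasurable]
  refine (lintegral_mono (g := 1) fun B ↦ ?_).trans_eq (by simp)
  simp only [sub_eq_add_neg, Real.exp_add, ENNReal.ofReal_mul (Real.exp_nonneg _), Pi.one_apply]
  rw [lintegral_const_mul' _ _ ENNReal.ofReal_ne_top]
  refine (mul_le_mul_right (lintegral_exp_neg_mul_transpose_sub_sq_le B M hl hτ) _).trans_eq ?_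
  rw [← ENNReal.ofReal_mul (Real.exp_nonneg _), ← Real.exp_add, add_neg_cancel, Real.exp_zero,
    ENNReal.ofReal_one]

end RowBlocks

section GramExponent

variable {ι K : Type*} [Fintype ι] [Fintype K]

theorem sum_subtype_block_le_sum (P : ι → Prop) [DecidablePred P] {g : ι → ι → ℝ}
    (hg : ∀ i j, 0 ≤ g i j) :
    ∑ i : {i // P i}, ∑ j : {j // ¬P j}, g i j ≤ ∑ i, ∑ j, g i j := by
  have h (Q : ι → Prop) [DecidablePred Q] {a : ι → ℝ} (ha : ∀ i, 0 ≤ a i) :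
      ∑ i : {i // Q i}, a i ≤ ∑ i, a i := by
    rw [← Fintype.sum_subtype_add_sum_subtype Q a]
    exact le_add_of_nonneg_right (Finset.sum_nonneg fun i _ ↦ ha i)
  calc _ ≤ ∑ i : {i // P i}, ∑ j, g i j := Finset.sum_le_sum fun i _ ↦ h (fun j ↦ ¬P j) (hg i)
    _ ≤ _ := h P fun i ↦ Finset.sum_nonneg fun j _ ↦ hg i j

theorem measurePreserving_submatrix_stdGaussianMatrix (P : ι → Prop) [DecidablePred P] :
    MeasurePreserving (fun W : Matrix ι K ℝ ↦ W.submatrix (Subtype.val : {i // ¬P i} → ι) id)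
      (stdGaussianMatrix ι K) (stdGaussianMatrix {i // ¬P i} K) :=
  measurePreserving_snd.comp
    (measurePreserving_piEquivPiSubtypeProd (fun _ : ι ↦ Measure.pi fun _ : K ↦ gaussianReal 0 1) P)

/-- The exponent of the change of measure from the law of the data to the prior: the spectral count
of the rows of `W` outside `P`, once for every row in `P`, minus `l` times the squared error of `M`
as an estimate of the Gram matrix of `W`. -/
def gramExponent (P : ι → Prop) [DecidablePred P] (l τ : ℝ) (M : Matrix ι ι ℝ)
    (W : Matrix ι K ℝ) : ℝ :=
  Fintype.card {i // P i} * (Real.log (1 + 2 * l * τ) *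
      spectralCount τ (W.submatrix (Subtype.val : {i // ¬P i} → ι) id) / 2) -
    l * ∑ i, ∑ j, ((W * Wᵀ) i j - M i j) ^ 2

theorem measurable_gramExponent (P : ι → Prop) [DecidablePred P] (l τ : ℝ) (M : Matrix ι ι ℝ) :
    Measurable (gramExponent P l τ M : Matrix ι K ℝ → ℝ) := by
  have h_count : Measurable fun W : Matrix ι K ℝ ↦
      spectralCount τ (W.submatrix (Subtype.val : {i // ¬P i} → ι) id) :=
    (measurable_spectralCount τ).comp (measurePreserving_submatrix_stdGaussianMatrix P).measurable
  have h_error : Measurable fun W : Matrix ι K ℝ ↦ ∑ i, ∑ j, ((W * Wᵀ) i j - M i j) ^ 2 := by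
    simp only [mul_apply, transpose_apply]
    fun_prop
  exact (((h_count.const_mul _).div_const 2).const_mul _).sub (h_error.const_mul l)

theorem lintegral_exp_gramExponent_le_one (P : ι → Prop) [DecidablePred P] (M : Matrix ι ι ℝ)
    {l τ : ℝ} (hl : 0 ≤ l) (hτ : 0 < τ) :
    ∫⁻ W : Matrix ι K ℝ, .ofReal (Real.exp (gramExponent P l τ M W)) ∂stdGaussianMatrix ι K ≤
      1 := by
  have h_split := measurePreserving_piEquivPiSubtypeProd
    (fun _ : ι ↦ Measure.pi fun _ : K ↦ gaussianReal 0 1) P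
  refine le_trans ?_ (lintegral_exp_block_le_one (K := K)
    (M.submatrix (Subtype.val : {i // P i} → ι) (Subtype.val : {i // ¬P i} → ι)) hl hτ)
  refine le_trans (lintegral_mono fun W ↦ ?_)
    (h_split.lintegral_comp_emb (MeasurableEquiv.measurableEmbedding _) _).le
  refine ENNReal.ofReal_le_ofReal (Real.exp_le_exp.2
    (sub_le_sub_left (mul_le_mul_of_nonneg_left ?_ hl) _))
  exact sum_subtype_block_le_sum P (g := fun i j ↦ ((W * Wᵀ) i j - M i j) ^ 2)
    fun i j ↦ sq_nonneg _

end GramExponent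

section ChangeOfMeasure

variable {Ω γ : Type*} [MeasurableSpace Ω] {μ : Measure Ω}

theorem integral_nonpos_of_lintegral_exp_le_one [IsProbabilityMeasure μ] {X : Ω → ℝ}
    (hX : Integrable X μ) (h : ∫⁻ ω, .ofReal (Real.exp (X ω)) ∂μ ≤ 1) : ∫ ω, X ω ∂μ ≤ 0 := by
  have h_exp : Integrable (fun ω ↦ Real.exp (X ω)) μ := by
    refine ⟨Real.continuous_exp.comp_aestronglyMeasurable hX.aestronglyMeasurable, ?_⟩
    rw [hasFiniteIntegral_iff_ofReal (ae_of_all _ fun ω ↦ Real.exp_nonneg _)]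
    exact h.trans_lt ENNReal.one_lt_top
  have h_exp_le : ∫ ω, Real.exp (X ω) ∂μ ≤ 1 := by
    rw [integral_eq_lintegral_of_nonneg_ae (ae_of_all _ fun ω ↦ Real.exp_nonneg _)
      h_exp.aestronglyMeasurable]
    exact ENNReal.toReal_le_of_le_ofReal zero_le_one (by simpa using h)
  have h_add : ∫ ω, (X ω + 1) ∂μ ≤ ∫ ω, Real.exp (X ω) ∂μ :=
    integral_mono (hX.add (integrable_const 1)) h_exp fun ω ↦ Real.add_one_le_exp (X ω)
  rw [integral_add hX (integrable_const 1)] at h_add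
  simp only [integral_const, probReal_univ, smul_eq_mul, mul_one] at h_add
  linarith

variable [MeasurableSpace γ] [MeasurableSingletonClass γ]

theorem lintegral_measure_singleton_mul_le_one [Countable γ] (ν : Measure γ)
    [IsProbabilityMeasure ν] (Y : Ω → γ) {f : γ → Ω → ℝ≥0∞} (hf : ∀ g, AEMeasurable (f g) μ)
    (h : ∀ g, ∫⁻ ω, f g ω ∂μ ≤ 1) : ∫⁻ ω, ν {Y ω} * f (Y ω) ω ∂μ ≤ 1 :=
  calc ∫⁻ ω, ν {Y ω} * f (Y ω) ω ∂μ
    _ ≤ ∫⁻ ω, ∑' g, ν {g} * f g ω ∂μ :=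
        lintegral_mono fun ω ↦ ENNReal.le_tsum (f := fun g ↦ ν {g} * f g ω) (Y ω)
    _ = ∑' g, ν {g} * ∫⁻ ω, f g ω ∂μ := by
        rw [lintegral_tsum fun g ↦ (hf g).const_mul _]
        exact tsum_congr fun g ↦ lintegral_const_mul'' _ (hf g)
    _ ≤ ∑' g, ν {g} := ENNReal.tsum_le_tsum fun g ↦ mul_le_of_le_one_right zero_le (h g)
    _ = 1 := by
        simpa using ν.tsum_indicator_apply_singleton Set.univ .univ

variable [Finite γ]

theorem integrable_comp_of_finite [IsFiniteMeasure μ] {Y : Ω → γ} (hY : AEMeasurable Y μ)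
    (φ : γ → ℝ) : Integrable (fun ω ↦ φ (Y ω)) μ :=
  Integrable.of_finite.comp_aemeasurable hY

theorem integral_le_integral_neg_log_measureReal_singleton [IsProbabilityMeasure μ]
    {ν : Measure γ} [IsProbabilityMeasure ν] (hν : ∀ g, 0 < ν.real {g}) {Y : Ω → γ}
    (hY : AEMeasurable Y μ) {F : γ → Ω → ℝ} (hF : ∀ g, AEMeasurable (F g) μ)
    (h_exp : ∀ g, ∫⁻ ω, .ofReal (Real.exp (F g ω)) ∂μ ≤ 1)
    (h_int : Integrable (fun ω ↦ F (Y ω) ω) μ) :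
    ∫ ω, F (Y ω) ω ∂μ ≤ ∫ ω, -Real.log (ν.real {Y ω}) ∂μ := by
  have h_log : Integrable (fun ω ↦ Real.log (ν.real {Y ω})) μ :=
    integrable_comp_of_finite hY fun g ↦ Real.log (ν.real {g})
  have h_nonpos : ∫ ω, (Real.log (ν.real {Y ω}) + F (Y ω) ω) ∂μ ≤ 0 := by
    refine integral_nonpos_of_lintegral_exp_le_one (h_log.add h_int) ?_
    refine le_trans (lintegral_mono fun ω ↦ ?_)
      (lintegral_measure_singleton_mul_le_one ν Y (fun g ↦ (hF g).exp.ennreal_ofReal) h_exp)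
    rw [Real.exp_add, Real.exp_log (hν _), ENNReal.ofReal_mul measureReal_nonneg,
      ofReal_measureReal]
  rw [integral_add h_log h_int] at h_nonpos
  rw [integral_neg]
  linarith

end ChangeOfMeasure

section BinomialRandom

variable {V : Type*}

instance [Countable V] : MeasurableSingletonClass (SimpleGraph V) where
  measurableSet_singleton G := by
    have h_edges := (SimpleGraph.measurableEmbedding_edgeSet (V := V)).measurable
      (measurableSet_singleton G.edgeSet)
    rwa [← Set.image_singleton, SimpleGraph.edgeSet_injective.preimage_image] at h_edges

open SimpleGraph

theorem binomialRandom_real_singleton_pos [Finite V] {p : unitInterval} (hp₀ : 0 < (p : ℝ))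
    (hp₁ : (p : ℝ) < 1) (G : SimpleGraph V) : 0 < (binomialRandom V p).real {G} := by
  have hq₀ : 0 < 1 - (p : ℝ) := sub_pos.2 hp₁
  simp only [measureReal_def, binomialRandom_singleton, ENNReal.toReal_mul, ENNReal.toReal_pow,
    ENNReal.coe_toReal, unitInterval.coe_toNNReal, unitInterval.coe_symm_eq]
  positivity

variable [Fintype V]

theorem sum_lt_adjMatrix_eq_ncard_edgeSet [LinearOrder V] (G : SimpleGraph V) [DecidableRel G.Adj] :
    ∑ i, ∑ j, (if i < j then G.adjMatrix ℝ i j else 0) = G.edgeSet.ncard := by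
  have h_degrees : ∑ i, ∑ j, G.adjMatrix ℝ i j = 2 * G.edgeSet.ncard := by
    have h (i : V) : ∑ j, G.adjMatrix ℝ i j = G.degree i := by
      simpa [mulVec, dotProduct] using G.adjMatrix_mulVec_const_apply (α := ℝ) (a := 1) (v := i)
    simp only [h]
    rw [← SimpleGraph.coe_edgeFinset, Set.ncard_coe_finset]
    exact_mod_cast G.sum_degrees_eq_twice_card_edges
  have h_split (i j : V) : G.adjMatrix ℝ i j =
      (if i < j then G.adjMatrix ℝ i j else 0) + if j < i then G.adjMatrix ℝ j i else 0 := by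
    rcases lt_trichotomy i j with h | rfl | h
    · simp [h, h.not_gt]
    · simp
    · simp [h, h.not_gt, G.adj_comm]
  have h_twice : ∑ i, ∑ j, G.adjMatrix ℝ i j =
      2 * ∑ i, ∑ j, (if i < j then G.adjMatrix ℝ i j else 0) :=
    calc ∑ i, ∑ j, G.adjMatrix ℝ i j
      _ = ∑ i, ∑ j, ((if i < j then G.adjMatrix ℝ i j else 0) +
            if j < i then G.adjMatrix ℝ j i else 0) :=
          Finset.sum_congr rfl fun i _ ↦ Finset.sum_congr rfl fun j _ ↦ h_split i j
      _ = _ := by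
          simp only [Finset.sum_add_distrib]
          rw [Finset.sum_comm (f := fun i j ↦ if j < i then _ else _), two_mul]
  linarith

theorem neg_log_binomialRandom_real_singleton {p : unitInterval} (hp₀ : 0 < (p : ℝ))
    (hp₁ : (p : ℝ) < 1) (G : SimpleGraph V) : -Real.log ((binomialRandom V p).real {G}) =
      G.edgeSet.ncard * -Real.log p +
        ((Fintype.card V).choose 2 - G.edgeSet.ncard) * -Real.log (1 - p) := by
  classical
  have h_le : G.edgeSet.ncard ≤ (Fintype.card V).choose 2 := by
    rw [← G.coe_edgeFinset, Set.ncard_coe_finset]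
    exact G.card_edgeFinset_le_card_choose_two
  simp only [measureReal_def, binomialRandom_singleton, ENNReal.toReal_mul, ENNReal.toReal_pow,
    Nat.card_eq_fintype_card, ENNReal.coe_toReal, unitInterval.coe_toNNReal,
    unitInterval.coe_symm_eq]
  rw [Real.log_mul (pow_ne_zero _ hp₀.ne') (pow_ne_zero _ (sub_pos.2 hp₁).ne'), Real.log_pow,
    Real.log_pow, Nat.cast_sub h_le]
  ring

theorem integral_neg_log_binomialRandom_real_singleton {Ω : Type*} [MeasurableSpace Ω]
    {μ : Measure Ω} [IsProbabilityMeasure μ] {p : unitInterval} (hp₀ : 0 < (p : ℝ))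
    (hp₁ : (p : ℝ) < 1) {Y : Ω → SimpleGraph V} (hY : AEMeasurable Y μ)
    (h_mean : ∫ ω, ((Y ω).edgeSet.ncard : ℝ) ∂μ = (Fintype.card V).choose 2 * p) :
    ∫ ω, -Real.log ((binomialRandom V p).real {Y ω}) ∂μ =
      (Fintype.card V).choose 2 * Real.binEntropy p := by
  have h_edges : Integrable (fun ω ↦ ((Y ω).edgeSet.ncard : ℝ)) μ :=
    integrable_comp_of_finite hY fun G ↦ (G.edgeSet.ncard : ℝ)
  have h_nonedges :
      Integrable (fun ω ↦ ((Fintype.card V).choose 2 - (Y ω).edgeSet.ncard : ℝ)) μ :=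
    (integrable_const _).sub h_edges
  simp only [neg_log_binomialRandom_real_singleton hp₀ hp₁]
  rw [integral_add (h_edges.mul_const _) (h_nonedges.mul_const _),
    integral_mul_const, integral_mul_const, integral_sub (integrable_const _) h_edges,
    h_mean, Real.binEntropy_eq_negMulLog_add_negMulLog_one_sub]
  simp only [integral_const, probReal_univ, smul_eq_mul, one_mul, Real.negMulLog]
  ring

end BinomialRandom

section GaussianMoments

theorem hasDerivAt_gaussianPDFReal_zero_one (x : ℝ) :
    HasDerivAt (gaussianPDFReal 0 1) (-x * gaussianPDFReal 0 1 x) x := by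
  have h_exponent : HasDerivAt (fun x : ℝ ↦ -(x - 0) ^ 2 / (2 * (1 : NNReal))) (-x) x := by
    convert! (((hasDerivAt_id x).sub_const 0).pow 2).neg.div_const (2 * ((1 : NNReal) : ℝ)) using 1
    simp only [id, sub_zero, NNReal.coe_one]
    ring
  convert! h_exponent.exp.const_mul (√(2 * Real.pi * (1 : NNReal)))⁻¹ using 1
  rw [gaussianPDFReal]
  ring

theorem integrable_pow_gaussianReal (n : ℕ) : Integrable (fun x ↦ x ^ n) (gaussianReal 0 1) :=
  integrable_pow_of_mem_interior_integrableExpSet (X := id) (by simp) n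

theorem integral_pow_add_two_gaussianReal (n : ℕ) :
    ∫ x, x ^ (n + 2) ∂gaussianReal 0 1 = (n + 1) * ∫ x, x ^ n ∂gaussianReal 0 1 := by
  have h_int (n : ℕ) : Integrable fun x ↦ x ^ n * gaussianPDFReal 0 1 x := by
    have h := integrable_pow_gaussianReal n
    rw [gaussianReal_of_var_ne_zero 0 one_ne_zero, integrable_withDensity_iff_integrable_smul'
      (measurable_gaussianPDF 0 1) (ae_of_all _ fun _ ↦ gaussianPDF_lt_top)] at h
    simpa only [toReal_gaussianPDF, smul_eq_mul, mul_comm] using h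
  have h_parts := integral_mul_deriv_eq_deriv_mul_of_integrable
    (u := fun x ↦ x ^ (n + 1)) (fun x _ ↦ hasDerivAt_pow (n + 1) x)
    (fun x _ ↦ hasDerivAt_gaussianPDFReal_zero_one x)
    ((h_int (n + 2)).neg.congr (ae_of_all _ fun x ↦ by
      simp only [Pi.mul_apply, Pi.neg_apply]
      ring))
    (((h_int n).const_mul (n + 1)).congr (ae_of_all _ fun x ↦ by simp [mul_assoc])) (h_int (n + 1))
  have h_left (x : ℝ) : x ^ (n + 1) * (-x * gaussianPDFReal 0 1 x) =
      -(gaussianPDFReal 0 1 x * x ^ (n + 2)) := by ring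
  have h_right (x : ℝ) : ((n + 1 : ℕ) : ℝ) * x ^ (n + 1 - 1) * gaussianPDFReal 0 1 x =
      (n + 1) * (gaussianPDFReal 0 1 x * x ^ n) := by
    rw [Nat.add_sub_cancel, Nat.cast_add_one]
    ring
  simp only [h_left, h_right, integral_neg, integral_const_mul, neg_inj] at h_parts
  simpa only [integral_gaussianReal_eq_integral_smul one_ne_zero, smul_eq_mul] using h_parts

theorem integral_sq_gaussianReal : ∫ x, x ^ 2 ∂gaussianReal 0 1 = 1 := by
  simpa using integral_pow_add_two_gaussianReal 0

theorem integral_pow_four_gaussianReal : ∫ x, x ^ 4 ∂gaussianReal 0 1 = 3 := by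
  have h := integral_pow_add_two_gaussianReal 2
  rw [integral_sq_gaussianReal] at h
  norm_num [h]

theorem memLp_two_sq_gaussianReal : MemLp (fun x ↦ x ^ 2) 2 (gaussianReal 0 1) :=
  (memLp_two_iff_integrable_sq (by fun_prop)).2 <| by
    simpa only [← pow_mul] using integrable_pow_gaussianReal 4

theorem variance_sq_gaussianReal : Var[fun x ↦ x ^ 2; gaussianReal 0 1] = 2 := by
  rw [variance_eq_sub memLp_two_sq_gaussianReal]
  simp only [Pi.pow_apply, ← pow_mul]
  norm_num [integral_pow_four_gaussianReal, integral_sq_gaussianReal]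

variable {K : Type*} [Fintype K]

theorem memLp_eval_pi_gaussianReal (k : K) {p : ℝ≥0∞} (hp : p ≠ ∞) :
    MemLp (fun x : K → ℝ ↦ x k) p (Measure.pi fun _ ↦ gaussianReal 0 1) :=
  (memLp_id_gaussianReal' p hp).comp_measurePreserving
    (measurePreserving_eval (fun _ : K ↦ gaussianReal 0 1) k)

theorem integral_dotProduct_self_pi_gaussianReal :
    ∫ x : K → ℝ, x ⬝ᵥ x ∂Measure.pi (fun _ ↦ gaussianReal 0 1) = Fintype.card K := by
  simp only [dotProduct, ← sq]
  rw [integral_finsetSum _ fun k _ ↦ (memLp_eval_pi_gaussianReal k (by simp)).integrable_sq]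
  simp [integral_comp_eval (μ := fun _ : K ↦ gaussianReal 0 1) (f := fun t ↦ t ^ 2) (by fun_prop),
    integral_sq_gaussianReal]

theorem variance_dotProduct_self_pi_gaussianReal :
    Var[fun x : K → ℝ ↦ x ⬝ᵥ x; Measure.pi fun _ ↦ gaussianReal 0 1] = 2 * Fintype.card K := by
  have h := variance_sum_pi (fun _ : K ↦ memLp_two_sq_gaussianReal)
  simp only [variance_sq_gaussianReal, Finset.sum_const, Finset.card_univ, nsmul_eq_mul] at h
  rw [mul_comm, ← h]
  congr 1 with x
  simp [dotProduct, sq]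

theorem integral_dotProduct_sq_pi_gaussianReal (a : K → ℝ) :
    ∫ x : K → ℝ, (a ⬝ᵥ x) ^ 2 ∂Measure.pi (fun _ ↦ gaussianReal 0 1) = a ⬝ᵥ a := by
  have h_mean : ∫ x : K → ℝ, a ⬝ᵥ x ∂Measure.pi (fun _ ↦ gaussianReal 0 1) = 0 := by
    simp only [dotProduct]
    rw [integral_finsetSum _ fun k _ ↦
      ((memLp_eval_pi_gaussianReal k ENNReal.one_ne_top).integrable le_rfl).const_mul _]
    simp [integral_const_mul,
      integral_comp_eval (μ := fun _ : K ↦ gaussianReal 0 1) (f := fun t ↦ t) (by fun_prop)]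
  have h_var := variance_sum_pi fun k : K ↦
    (memLp_id_gaussianReal (μ := 0) (v := 1) 2).const_mul (a k)
  rw [← variance_of_integral_eq_zero (by fun_prop) h_mean]
  simp only [variance_const_mul, variance_id_gaussianReal] at h_var
  simp only [dotProduct, ← sq]
  convert! h_var using 2
  · ext x
    simp [dotProduct]
  · simp

end GaussianMoments

section WishartMoments

variable {J K : Type*} [Fintype J] [Fintype K]

theorem measurePreserving_row_stdGaussianMatrix (j : J) :
    MeasurePreserving (fun W : Matrix J K ℝ ↦ W j) (stdGaussianMatrix J K)
      (Measure.pi fun _ ↦ gaussianReal 0 1) :=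
  measurePreserving_eval (fun _ : J ↦ Measure.pi fun _ : K ↦ gaussianReal 0 1) j

theorem measurePreserving_row_prod_row_stdGaussianMatrix {i j : J} (hij : i ≠ j) :
    MeasurePreserving (fun W : Matrix J K ℝ ↦ (W i, W j)) (stdGaussianMatrix J K)
      ((Measure.pi fun _ ↦ gaussianReal 0 1).prod (Measure.pi fun _ ↦ gaussianReal 0 1)) := by
  have hi := measurePreserving_row_stdGaussianMatrix (K := K) i
  have hj := measurePreserving_row_stdGaussianMatrix (K := K) j
  have h_indep : IndepFun (fun W : Matrix J K ℝ ↦ W i) (fun W ↦ W j) (stdGaussianMatrix J K) :=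
    (iIndepFun_pi (μ := fun _ : J ↦ Measure.pi fun _ : K ↦ gaussianReal 0 1)
      (X := fun _ ↦ id) fun _ ↦ aemeasurable_id).indepFun hij
  refine ⟨hi.measurable.prodMk hj.measurable, ?_⟩
  rw [(indepFun_iff_map_prod_eq_prod_map_map hi.measurable.aemeasurable
    hj.measurable.aemeasurable).1 h_indep, hi.map_eq, hj.map_eq]

theorem memLp_mul_transpose_apply_stdGaussianMatrix (i j : J) :
    MemLp (fun W : Matrix J K ℝ ↦ (W * Wᵀ) i j) 2 (stdGaussianMatrix J K) := by
  have h_entry (j : J) (k : K) : MemLp (fun W : Matrix J K ℝ ↦ W j k) 4 (stdGaussianMatrix J K) :=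
    (memLp_eval_pi_gaussianReal k (by simp)).comp_measurePreserving
      (measurePreserving_row_stdGaussianMatrix j)
  have : ENNReal.HolderTriple 4 4 2 := .of_toReal ⟨by norm_num, by norm_num, by norm_num⟩
  simp only [mul_apply, transpose_apply]
  exact memLp_finsetSum _ fun k _ ↦ (h_entry j k).mul (h_entry i k)

theorem integral_mul_transpose_apply_self_stdGaussianMatrix (i : J) :
    ∫ W : Matrix J K ℝ, (W * Wᵀ) i i ∂stdGaussianMatrix J K = Fintype.card K := by
  rw [← integral_dotProduct_self_pi_gaussianReal,
    ← (measurePreserving_row_stdGaussianMatrix i).map_eq,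
    integral_map (measurePreserving_row_stdGaussianMatrix i).aemeasurable (by fun_prop)]
  rfl

theorem variance_mul_transpose_apply_self_stdGaussianMatrix (i : J) :
    Var[fun W : Matrix J K ℝ ↦ (W * Wᵀ) i i; stdGaussianMatrix J K] = 2 * Fintype.card K := by
  rw [← variance_dotProduct_self_pi_gaussianReal,
    ← (measurePreserving_row_stdGaussianMatrix i).map_eq,
    variance_map (by fun_prop) (measurePreserving_row_stdGaussianMatrix i).aemeasurable]
  rfl

theorem integral_mul_transpose_apply_sq_stdGaussianMatrix_of_ne {i j : J} (hij : i ≠ j) :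
    ∫ W : Matrix J K ℝ, (W * Wᵀ) i j ^ 2 ∂stdGaussianMatrix J K = Fintype.card K := by
  have h_rows := measurePreserving_row_prod_row_stdGaussianMatrix (K := K) hij
  have h_meas : AEStronglyMeasurable (fun x : (K → ℝ) × (K → ℝ) ↦ (x.1 ⬝ᵥ x.2) ^ 2)
      ((Measure.pi fun _ ↦ gaussianReal 0 1).prod (Measure.pi fun _ ↦ gaussianReal 0 1)) := by
    simp only [dotProduct]
    fun_prop
  have h_int := (h_rows.integrable_comp h_meas).1
    (memLp_mul_transpose_apply_stdGaussianMatrix i j).integrable_sq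
  calc ∫ W : Matrix J K ℝ, (W * Wᵀ) i j ^ 2 ∂stdGaussianMatrix J K
    _ = ∫ x : (K → ℝ) × (K → ℝ), (x.1 ⬝ᵥ x.2) ^ 2
          ∂(Measure.pi fun _ ↦ gaussianReal 0 1).prod (Measure.pi fun _ ↦ gaussianReal 0 1) := by
        rw [← h_rows.map_eq, integral_map h_rows.aemeasurable (by rwa [h_rows.map_eq])]
        rfl
    _ = Fintype.card K := by
        rw [integral_prod _ h_int]
        simp only [integral_dotProduct_sq_pi_gaussianReal,
          integral_dotProduct_self_pi_gaussianReal]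

theorem integral_mul_transpose_apply_sq_stdGaussianMatrix [DecidableEq J] (i j : J) :
    ∫ W : Matrix J K ℝ, (W * Wᵀ) i j ^ 2 ∂stdGaussianMatrix J K =
      Fintype.card K + if i = j then (Fintype.card K * (Fintype.card K + 1) : ℝ) else 0 := by
  split_ifs with hij
  · subst hij
    have h := variance_eq_sub (memLp_mul_transpose_apply_stdGaussianMatrix (K := K) i i)
    rw [variance_mul_transpose_apply_self_stdGaussianMatrix,
      integral_mul_transpose_apply_self_stdGaussianMatrix] at h
    simp only [Pi.pow_apply] at h
    linarith
  · rw [integral_mul_transpose_apply_sq_stdGaussianMatrix_of_ne hij, add_zero]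

theorem spectralCount_eq_sum (τ : ℝ) (B : Matrix J K ℝ) :
    spectralCount τ B = (∑ i, (B * Bᵀ) i i) / τ - (∑ i, ∑ j, (B * Bᵀ) i j ^ 2) / (4 * τ ^ 2) := by
  have h_sq : (Bᵀ * B * (Bᵀ * B)).trace = ∑ i, ∑ j, (B * Bᵀ) i j ^ 2 := by
    rw [Matrix.mul_assoc, trace_mul_comm, ← Matrix.mul_assoc, Matrix.mul_assoc _ B]
    have h_symm (i j : J) : (B * Bᵀ) j i = (B * Bᵀ) i j := by
      simp only [mul_apply, transpose_apply, mul_comm]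
    simp only [trace, diag_apply, mul_apply (M := B * Bᵀ), h_symm, sq]
  rw [spectralCount, h_sq, trace_mul_comm]
  rfl

theorem integrable_spectralCount (τ : ℝ) :
    Integrable (spectralCount τ) (stdGaussianMatrix J K) := by
  simp only [funext (spectralCount_eq_sum (J := J) (K := K) τ)]
  have h (i j : J) := memLp_mul_transpose_apply_stdGaussianMatrix (K := K) i j
  exact ((integrable_finsetSum _ fun i _ ↦ (h i i).integrable one_le_two).div_const _).sub
    ((integrable_finsetSum _ fun i _ ↦ integrable_finsetSum _ fun j _ ↦
      (h i j).integrable_sq).div_const _)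

theorem integral_spectralCount (τ : ℝ) :
    ∫ B, spectralCount τ B ∂stdGaussianMatrix J K =
      Fintype.card J * Fintype.card K / τ -
        Fintype.card J * Fintype.card K * (Fintype.card J + Fintype.card K + 1) / (4 * τ ^ 2) := by
  classical
  have h (i j : J) := memLp_mul_transpose_apply_stdGaussianMatrix (K := K) i j
  have h_diag (i : J) := (h i i).integrable one_le_two
  have h_sq (i : J) := integrable_finsetSum Finset.univ fun j _ ↦ (h i j).integrable_sq
  simp only [spectralCount_eq_sum]
  rw [integral_sub ((integrable_finsetSum _ fun i _ ↦ h_diag i).div_const _)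
      ((integrable_finsetSum _ fun i _ ↦ h_sq i).div_const _), integral_div, integral_div,
    integral_finsetSum _ fun i _ ↦ h_diag i, integral_finsetSum _ fun i _ ↦ h_sq i]
  simp only [integral_finsetSum _ fun j _ ↦ (h _ j).integrable_sq,
    integral_mul_transpose_apply_self_stdGaussianMatrix,
    integral_mul_transpose_apply_sq_stdGaussianMatrix, Finset.sum_add_distrib, Finset.sum_ite_eq,
    Finset.mem_univ, if_true, Finset.sum_const, Finset.card_univ, nsmul_eq_mul]
  ring

end WishartMoments

section InformationBound

variable {ι K Ω : Type*} [Fintype ι] [Fintype K] [MeasurableSpace Ω] {μ : Measure Ω}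

theorem integrable_sum_mul_transpose_sub_sq {γ : Type*} [Finite γ] [MeasurableSpace γ]
    [MeasurableSingletonClass γ] {W : Ω → Matrix ι K ℝ} (hW : HasLaw W (stdGaussianMatrix ι K) μ)
    {Y : Ω → γ} (hY : AEMeasurable Y μ) (g : γ → Matrix ι ι ℝ) :
    Integrable (fun ω ↦ ∑ i, ∑ j, ((W ω * (W ω)ᵀ) i j - g (Y ω) i j) ^ 2) μ := by
  have := hW.isProbabilityMeasure
  refine integrable_finsetSum _ fun i _ ↦ integrable_finsetSum _ fun j _ ↦ MemLp.integrable_sq ?_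
  have h_gram : MemLp (fun ω ↦ (W ω * (W ω)ᵀ) i j) 2 μ :=
    (hW.map_eq ▸ memLp_mul_transpose_apply_stdGaussianMatrix i j).comp_of_map hW.aemeasurable
  have h_estimate : MemLp (fun ω ↦ g (Y ω) i j) 2 μ :=
    (memLp_two_iff_integrable_sq (integrable_comp_of_finite hY fun y ↦ g y i j).1).2
      (integrable_comp_of_finite hY fun y ↦ g y i j ^ 2)
  exact h_gram.sub h_estimate

theorem integrable_spectralCount_submatrix {W : Ω → Matrix ι K ℝ}
    (hW : HasLaw W (stdGaussianMatrix ι K) μ) (P : ι → Prop) [DecidablePred P] (τ : ℝ) :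
    Integrable
      (fun ω ↦ spectralCount τ ((W ω).submatrix (Subtype.val : {i // ¬P i} → ι) id)) μ := by
  have h_block := (measurePreserving_submatrix_stdGaussianMatrix (K := K) P).comp_hasLaw hW
  have h := integrable_spectralCount (J := {i // ¬P i}) (K := K) τ
  rw [← h_block.map_eq] at h
  exact h.comp_aemeasurable h_block.aemeasurable

theorem integral_spectralCount_submatrix {W : Ω → Matrix ι K ℝ}
    (hW : HasLaw W (stdGaussianMatrix ι K) μ) (P : ι → Prop) [DecidablePred P] (τ : ℝ) :
    ∫ ω, spectralCount τ ((W ω).submatrix (Subtype.val : {i // ¬P i} → ι) id) ∂μ =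
      ∫ B, spectralCount τ B ∂stdGaussianMatrix {i // ¬P i} K :=
  ((measurePreserving_submatrix_stdGaussianMatrix (K := K) P).comp_hasLaw hW).integral_comp
    (integrable_spectralCount τ).aestronglyMeasurable

open SimpleGraph in
theorem card_mul_log_mul_integral_spectralCount_sub_le_choose_two_mul_binEntropy
    [IsProbabilityMeasure μ] (P : ι → Prop) [DecidablePred P] {l τ : ℝ} (hl : 0 ≤ l) (hτ : 0 < τ)
    {p : unitInterval} (hp₀ : 0 < (p : ℝ)) (hp₁ : (p : ℝ) < 1) {W : Ω → Matrix ι K ℝ}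
    (hW : HasLaw W (stdGaussianMatrix ι K) μ) {Y : Ω → SimpleGraph ι} (hY : AEMeasurable Y μ)
    (h_mean : ∫ ω, ((Y ω).edgeSet.ncard : ℝ) ∂μ = (Fintype.card ι).choose 2 * p)
    (g : SimpleGraph ι → Matrix ι ι ℝ) :
    Fintype.card {i // P i} * (Real.log (1 + 2 * l * τ) *
        (∫ B, spectralCount τ B ∂stdGaussianMatrix {i // ¬P i} K) / 2) -
      l * ∫ ω, ∑ i, ∑ j, ((W ω * (W ω)ᵀ) i j - g (Y ω) i j) ^ 2 ∂μ ≤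
        (Fintype.card ι).choose 2 * Real.binEntropy p := by
  have h_count : Integrable (fun ω ↦ Fintype.card {i // P i} * (Real.log (1 + 2 * l * τ) *
      spectralCount τ ((W ω).submatrix (Subtype.val : {i // ¬P i} → ι) id) / 2)) μ :=
    (((integrable_spectralCount_submatrix hW P τ).const_mul _).div_const 2).const_mul _
  have h_error : Integrable
      (fun ω ↦ l * ∑ i, ∑ j, ((W ω * (W ω)ᵀ) i j - g (Y ω) i j) ^ 2) μ :=
    (integrable_sum_mul_transpose_sub_sq hW hY g).const_mul l
  have h_exp (G : SimpleGraph ι) :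
      ∫⁻ ω, .ofReal (Real.exp (gramExponent P l τ (g G) (W ω))) ∂μ ≤ 1 :=
    (hW.lintegral_comp (f := fun B ↦ .ofReal (Real.exp (gramExponent P l τ (g G) B)))
      (measurable_gramExponent P l τ (g G)).exp.ennreal_ofReal.aemeasurable).trans_le
        (lintegral_exp_gramExponent_le_one P (g G) hl hτ)
  have h_information := integral_le_integral_neg_log_measureReal_singleton
    (binomialRandom_real_singleton_pos hp₀ hp₁) hY
    (fun G ↦ (measurable_gramExponent P l τ (g G)).comp_aemeasurable hW.aemeasurable) h_exp
    (h_count.sub h_error)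
  simp only [gramExponent, Function.comp_apply] at h_information
  rwa [integral_neg_log_binomialRandom_real_singleton hp₀ hp₁ hY h_mean,
    integral_sub h_count h_error, integral_const_mul, integral_div, integral_const_mul,
    integral_const_mul, integral_spectralCount_submatrix hW] at h_information

end InformationBound

section LowerBound

variable {ι J K : Type*} [Fintype ι] [Fintype J] [Fintype K] {Ω : Type*} [MeasurableSpace Ω]
  {μ : Measure Ω}

theorem min_div_four_le_integral_spectralCount [Nonempty J] :
    min (Fintype.card J : ℝ) (Fintype.card K) / 4 ≤
      ∫ B, spectralCount (max (Fintype.card J : ℝ) (Fintype.card K)) B ∂stdGaussianMatrix J K := by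
  rw [integral_spectralCount]
  have hJ : (1 : ℝ) ≤ Fintype.card J := mod_cast Fintype.card_pos
  have hτ := hJ.trans (le_max_left (Fintype.card J : ℝ) (Fintype.card K))
  have h_sum : (Fintype.card J + Fintype.card K + 1 : ℝ) ≤
      3 * max (Fintype.card J : ℝ) (Fintype.card K) := by
    linarith [le_max_left (Fintype.card J : ℝ) (Fintype.card K),
      le_max_right (Fintype.card J : ℝ) (Fintype.card K)]
  rw [← min_mul_max (Fintype.card J : ℝ) (Fintype.card K)]
  set κ := min (Fintype.card J : ℝ) (Fintype.card K)
  set τ := max (Fintype.card J : ℝ) (Fintype.card K)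
  calc κ / 4 = κ * τ / τ - κ * τ * (3 * τ) / (4 * τ ^ 2) := by field_simp; ring
    _ ≤ _ := by gcongr

theorem mul_exp_neg_le_integral_sum_mul_transpose_sub_sq [Nonempty K] [IsProbabilityMeasure μ]
    (P : ι → Prop) [DecidablePred P] [Nonempty {i // ¬P i}] {p : unitInterval}
    (hp₀ : 0 < (p : ℝ)) (hp₁ : (p : ℝ) < 1) {W : Ω → Matrix ι K ℝ}
    (hW : HasLaw W (stdGaussianMatrix ι K) μ) {Y : Ω → SimpleGraph ι} (hY : AEMeasurable Y μ)
    (h_mean : ∫ ω, ((Y ω).edgeSet.ncard : ℝ) ∂μ = (Fintype.card ι).choose 2 * p)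
    (g : SimpleGraph ι → Matrix ι ι ℝ) {k s : ℝ} (hk : 0 ≤ k)
    (h_budget : (Fintype.card ι).choose 2 * Real.binEntropy p + s ≤
      Fintype.card {i // P i} *
        (k * (min (Fintype.card {i // ¬P i} : ℝ) (Fintype.card K) / 4) / 2)) :
    s * (2 * max (Fintype.card {i // ¬P i} : ℝ) (Fintype.card K)) * Real.exp (-k) ≤
      ∫ ω, ∑ i, ∑ j, ((W ω * (W ω)ᵀ) i j - g (Y ω) i j) ^ 2 ∂μ := by
  have h_trace := min_div_four_le_integral_spectralCount (J := {i // ¬P i}) (K := K)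
  set κ := min (Fintype.card {i // ¬P i} : ℝ) (Fintype.card K)
  set τ := max (Fintype.card {i // ¬P i} : ℝ) (Fintype.card K)
  have hτ : 0 < τ := lt_max_of_lt_right (mod_cast Fintype.card_pos)
  set l := Real.exp k / (2 * τ)
  have h_log : k ≤ Real.log (1 + 2 * l * τ) := by
    have : 2 * l * τ = Real.exp k := by
      simp only [l]
      field_simp
    rw [this, Real.le_log_iff_exp_le (by positivity)]
    linarith
  have h_information := card_mul_log_mul_integral_spectralCount_sub_le_choose_two_mul_binEntropy
    P (l := l) (by positivity) hτ hp₀ hp₁ hW hY h_mean g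
  have h_gain : Fintype.card {i // P i} * (k * (κ / 4) / 2) ≤
      Fintype.card {i // P i} * (Real.log (1 + 2 * l * τ) *
        (∫ B, spectralCount τ B ∂stdGaussianMatrix {i // ¬P i} K) / 2) := by
    gcongr
    exact hk.trans h_log
  have h_error : s ≤ l * ∫ ω, ∑ i, ∑ j, ((W ω * (W ω)ᵀ) i j - g (Y ω) i j) ^ 2 ∂μ := by
    linarith
  rw [Real.exp_neg, ← div_eq_mul_inv, div_le_iff₀ (Real.exp_pos k)]
  rw [div_mul_eq_mul_div, le_div_iff₀ (by positivity)] at h_error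
  linarith

theorem sq_div_two_mul_add_mul_min_le {n m q d c h : ℝ} (hn : 0 ≤ n) (hm : n ≤ 2 * m)
    (hq : n ≤ 3 * q) (hc : 0 < c) (hd : c * n * h ≤ d) (hd₀ : 0 ≤ d) (hh : h ≤ 1) :
    n ^ 2 / 2 * h + n * min m d ≤ q * ((48 + 12 / c) * (min m d / 4) / 2) := by
  have hκ : 0 ≤ min m d := le_min (by linarith) hd₀
  have h_edges : n * h ≤ (2 + 1 / c) * min m d := by
    rcases min_choice m d with h_min | h_min <;> rw [h_min] at hκ ⊢
    · have : 0 ≤ 1 / c * m := by positivity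
      linarith [mul_le_of_le_one_right hn hh]
    · have : n * h ≤ 1 / c * d := by
        rw [one_div, inv_mul_eq_div, le_div_iff₀ hc]
        linarith
      linarith
  calc n ^ 2 / 2 * h + n * min m d
    _ = n / 2 * (n * h) + n * min m d := by ring
    _ ≤ n / 2 * ((2 + 1 / c) * min m d) + n * min m d := by gcongr
    _ = n / 3 * ((48 + 12 / c) * (min m d / 4) / 2) := by ring
    _ ≤ q * ((48 + 12 / c) * (min m d / 4) / 2) := by
        gcongr
        linarith

theorem two_mul_card_le_integral_mul_transpose_apply_self_sub_sq {W : Ω → Matrix ι K ℝ}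
    (hW : HasLaw W (stdGaussianMatrix ι K) μ) (i : ι) (a : ℝ) :
    2 * (Fintype.card K : ℝ) ≤ ∫ ω, ((W ω * (W ω)ᵀ) i i - a) ^ 2 ∂μ := by
  have h_meas := (memLp_mul_transpose_apply_stdGaussianMatrix (K := K) i i).aestronglyMeasurable
  have h_sub : AEStronglyMeasurable (fun V : Matrix ι K ℝ ↦ (V * Vᵀ) i i - a)
      (stdGaussianMatrix ι K) := h_meas.sub aestronglyMeasurable_const
  calc 2 * (Fintype.card K : ℝ)
    _ = Var[fun V : Matrix ι K ℝ ↦ (V * Vᵀ) i i - a; stdGaussianMatrix ι K] := by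
        rw [variance_sub_const h_meas, variance_mul_transpose_apply_self_stdGaussianMatrix]
    _ ≤ ∫ V : Matrix ι K ℝ, ((V * Vᵀ) i i - a) ^ 2 ∂stdGaussianMatrix ι K :=
        variance_le_expectation_sq h_sub
    _ = _ := (hW.integral_comp (h_sub.pow 2)).symm

variable [Nonempty K] [IsProbabilityMeasure μ] {c : ℝ} {p : unitInterval} {W : Ω → Matrix ι K ℝ}
  {Y : Ω → SimpleGraph ι}

theorem sq_card_mul_exp_neg_le_integral_of_nontrivial [Nontrivial ι] (hc : 0 < c)
    (hp₀ : 0 < (p : ℝ)) (hp₁ : (p : ℝ) < 1) (hW : HasLaw W (stdGaussianMatrix ι K) μ)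
    (hY : AEMeasurable Y μ)
    (h_mean : ∫ ω, ((Y ω).edgeSet.ncard : ℝ) ∂μ = (Fintype.card ι).choose 2 * p)
    (hd : c * Fintype.card ι * Real.binEntropy p ≤ Fintype.card K)
    (g : SimpleGraph ι → Matrix ι ι ℝ) :
    Fintype.card ι ^ 2 * Fintype.card K * Real.exp (-(48 + 12 / c)) ≤
      ∫ ω, ∑ i, ∑ j, ((W ω * (W ω)ᵀ) i j - g (Y ω) i j) ^ 2 ∂μ := by
  classical
  have hn : 1 < Fintype.card ι := Fintype.one_lt_card
  obtain ⟨P, hq⟩ : ∃ P : ι → Prop, Fintype.card {i // P i} = Fintype.card ι / 2 := by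
    obtain ⟨S, -, hS⟩ := Finset.exists_subset_card_eq (s := Finset.univ (α := ι))
      (n := Fintype.card ι / 2) (Nat.div_le_self _ _)
    exact ⟨(· ∈ S), by simp [Fintype.card_subtype, hS]⟩
  have hm : Fintype.card {i // ¬P i} = Fintype.card ι - Fintype.card ι / 2 := by
    rw [Fintype.card_subtype_compl, hq]
  have : Nonempty {i // ¬P i} := Fintype.card_pos_iff.1 (by omega)
  have hm₂ : (Fintype.card ι : ℝ) ≤ 2 * Fintype.card {i // ¬P i} :=
    mod_cast (by omega : Fintype.card ι ≤ 2 * Fintype.card {i // ¬P i})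
  have hq₃ : (Fintype.card ι : ℝ) ≤ 3 * Fintype.card {i // P i} :=
    mod_cast (by omega : Fintype.card ι ≤ 3 * Fintype.card {i // P i})
  have h_entropy : Real.binEntropy p ≤ 1 := by
    linarith [Real.binEntropy_le_log_two (p := p), Real.log_two_lt_d9]
  have h_choose : ((Fintype.card ι).choose 2 : ℝ) ≤ Fintype.card ι ^ 2 / 2 := by
    simpa using Nat.choose_le_pow_div (α := ℝ) 2 (Fintype.card ι)
  have h_budget := sq_div_two_mul_add_mul_min_le (Nat.cast_nonneg _) hm₂ hq₃ hc hd
    (Nat.cast_nonneg _) h_entropy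
  have h_edges := mul_le_mul_of_nonneg_right h_choose (Real.binEntropy_nonneg hp₀.le hp₁.le)
  refine le_trans ?_ (mul_exp_neg_le_integral_sum_mul_transpose_sub_sq P hp₀ hp₁ hW hY h_mean
    g (k := 48 + 12 / c) (by positivity) ((add_le_add_left h_edges _).trans h_budget))
  refine mul_le_mul_of_nonneg_right ?_ (Real.exp_nonneg _)
  calc (Fintype.card ι ^ 2 * Fintype.card K : ℝ)
    _ = Fintype.card ι * (Fintype.card ι * Fintype.card K) := by ring
    _ ≤ Fintype.card ι * (2 * Fintype.card {i // ¬P i} * Fintype.card K) := by gcongr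
    _ = _ := by
        rw [mul_assoc 2, ← min_mul_max (Fintype.card {i // ¬P i} : ℝ)]
        ring

theorem sq_card_mul_exp_neg_le_integral [Nonempty ι] (hc : 0 < c) (hp₀ : 0 < (p : ℝ))
    (hp₁ : (p : ℝ) < 1) (hW : HasLaw W (stdGaussianMatrix ι K) μ) (hY : AEMeasurable Y μ)
    (h_mean : ∫ ω, ((Y ω).edgeSet.ncard : ℝ) ∂μ = (Fintype.card ι).choose 2 * p)
    (hd : c * Fintype.card ι * Real.binEntropy p ≤ Fintype.card K)
    (g : SimpleGraph ι → Matrix ι ι ℝ) :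
    Fintype.card ι ^ 2 * Fintype.card K * Real.exp (-(48 + 12 / c)) ≤
      ∫ ω, ∑ i, ∑ j, ((W ω * (W ω)ᵀ) i j - g (Y ω) i j) ^ 2 ∂μ := by
  cases subsingleton_or_nontrivial ι with
  | inr _ => exact sq_card_mul_exp_neg_le_integral_of_nontrivial hc hp₀ hp₁ hW hY h_mean hd g
  | inl _ =>
    obtain ⟨_⟩ := nonempty_unique ι
    have h_exp : Real.exp (-(48 + 12 / c)) ≤ 1 := Real.exp_le_one_iff.2 (by
      rw [neg_nonpos]
      positivity)
    simp only [Fintype.sum_unique, Fintype.card_unique, Subsingleton.elim (Y _) ⊥]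
    calc ((1 : ℕ) : ℝ) ^ 2 * Fintype.card K * Real.exp (-(48 + 12 / c))
      _ ≤ 2 * Fintype.card K := by nlinarith [Nat.cast_nonneg (α := ℝ) (Fintype.card K)]
      _ ≤ _ := two_mul_card_le_integral_mul_transpose_apply_self_sub_sq hW default _

end LowerBound

section Normalization

variable {n d : ℕ} {Ω : Type*} [MeasurableSpace Ω] {μ : Measure Ω}
  {Z : Ω → Matrix (Fin n) (Fin d) ℝ}

theorem hasLaw_sqrt_smul_of_hasLaw_gaussianMatrix (hd : d ≠ 0)
    (hZ : HasLaw Z (gaussianMatrix n d) μ) :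
    HasLaw (fun ω ↦ √d • Z ω) (stdGaussianMatrix (Fin n) (Fin d)) μ := by
  have h_entry : (gaussianReal 0 (d : NNReal)⁻¹).map (√d * ·) = gaussianReal 0 1 := by
    rw [gaussianReal_map_const_mul, mul_zero]
    congr 1
    ext
    simp [hd]
  have h_row : MeasurePreserving (fun z : Fin d → ℝ ↦ fun k ↦ √d * z k)
      (Measure.pi fun _ ↦ gaussianReal 0 (d : NNReal)⁻¹) (Measure.pi fun _ ↦ gaussianReal 0 1) :=
    measurePreserving_pi _ _ fun _ ↦ ⟨measurable_const_mul _, h_entry⟩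
  have h_matrix : MeasurePreserving (fun V : Fin n → Fin d → ℝ ↦ fun i k ↦ √d * V i k)
      (gaussianMatrix n d) (stdGaussianMatrix (Fin n) (Fin d)) :=
    measurePreserving_pi _ _ fun _ ↦ h_row
  exact h_matrix.comp_hasLaw hZ

theorem lossL_mul_transpose_eq (hd : d ≠ 0) (V : Matrix (Fin n) (Fin d) ℝ)
    (M : Matrix (Fin n) (Fin n) ℝ) :
    lossL n d (V * Vᵀ) M = (d * (n * (n + 1)) : ℝ)⁻¹ *
      ∑ i, ∑ j, (((√d • V) * (√d • V)ᵀ) i j - ((d : ℝ) • M) i j) ^ 2 := by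
  have h_entry (i j : Fin n) : ((√d • V) * (√d • V)ᵀ) i j - ((d : ℝ) • M) i j =
      d * ((V * Vᵀ) i j - M i j) := by
    rw [transpose_smul, smul_mul, Matrix.mul_smul, smul_smul,
      Real.mul_self_sqrt (Nat.cast_nonneg d), Matrix.smul_apply, Matrix.smul_apply, smul_eq_mul,
      smul_eq_mul, mul_sub]
  have hd' : (d : ℝ) ≠ 0 := Nat.cast_ne_zero.2 hd
  simp only [lossL, frobSq, h_entry, mul_pow, ← Finset.mul_sum]
  rw [← mul_assoc]
  congr 1
  field_simp

theorem exp_neg_div_two_le_integral_lossL [IsProbabilityMeasure μ] (hn : n ≠ 0) (hd : d ≠ 0)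
    {c : ℝ} (hc : 0 < c) {p : unitInterval} (hp₀ : 0 < (p : ℝ)) (hp₁ : (p : ℝ) < 1)
    (hZ : HasLaw Z (gaussianMatrix n d) μ) {Y : Ω → SimpleGraph (Fin n)} (hY : AEMeasurable Y μ)
    (h_mean : ∫ ω, ((Y ω).edgeSet.ncard : ℝ) ∂μ = n.choose 2 * p)
    (h_dim : c * n * Real.binEntropy p ≤ d) (g : SimpleGraph (Fin n) → Matrix (Fin n) (Fin n) ℝ) :
    Real.exp (-(48 + 12 / c)) / 2 ≤ ∫ ω, lossL n d (Z ω * (Z ω)ᵀ) (g (Y ω)) ∂μ := by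
  have : NeZero n := ⟨hn⟩
  have : NeZero d := ⟨hd⟩
  have h_bound := sq_card_mul_exp_neg_le_integral hc hp₀ hp₁
    (hasLaw_sqrt_smul_of_hasLaw_gaussianMatrix hd hZ) hY (by simpa using h_mean)
    (by simpa using h_dim) fun G ↦ (d : ℝ) • g G
  simp only [Fintype.card_fin] at h_bound
  simp only [lossL_mul_transpose_eq hd, integral_const_mul]
  have hn₁ : (1 : ℝ) ≤ n := mod_cast Nat.one_le_iff_ne_zero.2 hn
  have hd₀ : (0 : ℝ) < d := mod_cast Nat.pos_of_ne_zero hd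
  calc Real.exp (-(48 + 12 / c)) / 2
    _ ≤ n / (n + 1) * Real.exp (-(48 + 12 / c)) := by
        rw [div_eq_inv_mul]
        gcongr
        rw [le_div_iff₀ (by positivity)]
        linarith
    _ = (d * (n * (n + 1)) : ℝ)⁻¹ * (n ^ 2 * d * Real.exp (-(48 + 12 / c))) := by field_simp
    _ ≤ _ := by gcongr

end Normalization

section Adjacency

variable {V Ω : Type*} [MeasurableSpace Ω] {μ : Measure Ω} {A : Ω → Matrix V V ℝ}

theorem measurable_toGraph (hA : Measurable A) (h_adj : ∀ ω, (A ω).IsAdjMatrix) :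
    Measurable fun ω ↦ (h_adj ω).toGraph := by
  refine SimpleGraph.measurable_iff_adj.2 fun u v ↦ ?_
  have h_entry : Measurable fun ω ↦ A ω u v :=
    (measurable_pi_apply v).comp ((measurable_pi_apply u).comp hA)
  exact measurableSet_setOfPred.1 (h_entry (measurableSet_singleton 1))

theorem integral_ncard_edgeSet_toGraph [Fintype V] [LinearOrder V] [IsFiniteMeasure μ]
    (hA : Measurable A) (h_adj : ∀ ω, (A ω).IsAdjMatrix) :
    ∫ ω, ((h_adj ω).toGraph.edgeSet.ncard : ℝ) ∂μ =
      ∑ i, ∑ j, if i < j then ∫ ω, A ω i j ∂μ else 0 := by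
  have h_int (i j : V) : Integrable (fun ω ↦ if i < j then A ω i j else 0) μ := by
    have h_entry : Measurable fun ω ↦ A ω i j :=
      (measurable_pi_apply j).comp ((measurable_pi_apply i).comp hA)
    split_ifs
    · refine .of_bound h_entry.aestronglyMeasurable 1 (ae_of_all _ fun ω ↦ ?_)
      obtain h | h := (h_adj ω).zero_or_one i j <;> simp [h]
    · exact integrable_const 0
  have h_card (ω : Ω) : ((h_adj ω).toGraph.edgeSet.ncard : ℝ) =
      ∑ i, ∑ j, if i < j then A ω i j else 0 := by
    classical
    rw [← sum_lt_adjMatrix_eq_ncard_edgeSet, (h_adj ω).adjMatrix_toGraph_eq]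
  simp only [h_card]
  rw [integral_finsetSum _ fun i _ ↦ integrable_finsetSum _ fun j _ ↦ h_int i j]
  refine Finset.sum_congr rfl fun i _ ↦ ?_
  rw [integral_finsetSum _ fun j _ ↦ h_int i j]
  refine Finset.sum_congr rfl fun j _ ↦ ?_
  split_ifs <;> simp

end Adjacency

theorem random_geometric_graph_recovery_impossible_gaussian_general :
    ∀ c : ℝ, 0 < c → ∃ D : ℝ, 0 < D ∧
      ∀ (n d : ℕ), 0 < n → 0 < d → ∀ p : ℝ, 0 < p → p < 1 →
        ∀ {Ω : Type*} [MeasurableSpace Ω] (μ : Measure Ω) [IsProbabilityMeasure μ]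
          (Z : Ω → Matrix (Fin n) (Fin d) ℝ) (A : Ω → Matrix (Fin n) (Fin n) ℝ)
          (f : Matrix (Fin n) (Fin n) ℝ → Matrix (Fin n) (Fin n) ℝ),
          HasLaw Z (gaussianMatrix n d) μ → Measurable A → (∀ ω, (A ω).IsAdjMatrix) →
          (∑ i, ∑ j, if i < j then ∫ ω, A ω i j ∂μ else 0) = n.choose 2 * p →
          c * n * Real.binEntropy p ≤ d →
          D ≤ ∫ ω, lossL n d (Z ω * (Z ω)ᵀ) (f (A ω)) ∂μ := by
  classical
  refine fun c hc ↦ ⟨Real.exp (-(48 + 12 / c)) / 2, by positivity,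
    fun n d hn hd p hp₀ hp₁ Ω _ μ _ Z A f hZ hA h_adj h_density h_dim ↦ ?_⟩
  let adjMatrix (G : SimpleGraph (Fin n)) : Matrix (Fin n) (Fin n) ℝ := G.adjMatrix ℝ
  have h_adjMatrix (ω : Ω) : adjMatrix (h_adj ω).toGraph = A ω := by
    ext i j
    obtain h | h := (h_adj ω).zero_or_one i j <;> simp [adjMatrix, h]
  have h_bound := exp_neg_div_two_le_integral_lossL hn.ne' hd.ne' hc (p := ⟨p, hp₀.le, hp₁.le⟩)
    hp₀ hp₁ hZ (measurable_toGraph hA h_adj).aemeasurable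
    ((integral_ncard_edgeSet_toGraph hA h_adj).trans h_density) h_dim fun G ↦ f (adjMatrix G)
  simpa only [h_adjMatrix] using h_bound

/-- **Impossibility of inner product recovery in a random geometric graph /
latent space model (Gaussian latent locations).**
For every `c > 0` there is `D = D(c) > 0` such that: for all positive `n, d`,
`p ∈ (0,1)`, any probability space `(Ω, μ)`, any latent matrix `Z : Ω → ℝ^{n×d}`
with law `gaussianMatrix n d` (i.i.d. `N(0,1/d)` entries), any randomness `U`
independent of `Z`, any graph `A = F(Z, U)` with values in symmetric `{0,1}`
matrices with zero diagonal and average edge density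
`Σ_{i<j} E[A_{ij}] = (n choose 2) p`, and any estimator `X̂ = f(A)`:
if `d ≥ c · n · h(p)` then `E[L(X, X̂)] ≥ D` where `X = Z Zᵀ`. -/
theorem random_geometric_graph_recovery_impossible_gaussian :
    ∀ c : ℝ, 0 < c → ∃ D : ℝ, 0 < D ∧
      ∀ (n d : ℕ), 0 < n → 0 < d → ∀ p : ℝ, 0 < p → p < 1 →
        ∀ (Ω : Type) (_ : MeasurableSpace Ω) (μ : Measure Ω), IsProbabilityMeasure μ →
          ∀ (β : Type) (_ : MeasurableSpace β)
            (Z : Ω → Matrix (Fin n) (Fin d) ℝ) (U : Ω → β)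
            (F : Matrix (Fin n) (Fin d) ℝ → β → Matrix (Fin n) (Fin n) ℝ)
            (f : Matrix (Fin n) (Fin n) ℝ → Matrix (Fin n) (Fin n) ℝ),
            Measurable Z → Measurable U →
            Measurable (fun q : Matrix (Fin n) (Fin d) ℝ × β => F q.1 q.2) →
            Measurable f →
            μ.map Z = gaussianMatrix n d →
            IndepFun Z U μ →
            (∀ z u i j, F z u i j = 0 ∨ F z u i j = 1) →
            (∀ z u i j, F z u i j = F z u j i) →
            (∀ z u i, F z u i i = 0) →
            (∑ i : Fin n, ∑ j : Fin n, if i < j then ∫ ω, F (Z ω) (U ω) i j ∂μ else 0)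
              = (n.choose 2 : ℝ) * p →
            (d : ℝ) ≥ c * n * Real.binEntropy p →
            D ≤ ∫ ω, lossL n d (Z ω * (Z ω)ᵀ) (f (F (Z ω) (U ω))) ∂μ := by
  intro c hc
  obtain ⟨D, hD, h⟩ := random_geometric_graph_recovery_impossible_gaussian_general c hc
  exact ⟨D, hD, fun n d hn hd p hp₀ hp₁ Ω _ μ _ β _ Z U F f hZ hU hF _ hZ_law _ h_zero_or_one h_symm
    h_diag ↦ h n d hn hd p hp₀ hp₁ μ Z (fun ω ↦ F (Z ω) (U ω)) f ⟨hZ.aemeasurable, hZ_law⟩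
      (hF.comp (hZ.prodMk hU)) fun ω ↦
        ⟨h_zero_or_one _ _, Matrix.IsSymm.ext fun i j ↦ h_symm _ _ j i, h_diag _ _⟩⟩

end
end

section
/- For every constant c > 0 there is a constant D = D(c) > 0 with the following property. Let n, d be positive integers, p ∈ (0, 1), and let (p_{ij})_{i,j=1}^n be numbers in [0,1] with Σ_{i,j=1}^n p_{ij} = n²·p. On a probability space, let Z be a random n×d real matrix with i.i.d. N(0, 1/d) entries, let X := Z Zᵀ, let U be a random variable independent of Z, and let A := F(X, U) be a measurable function taking values in {0, 1, ∗}^{n×n} such that P(A_{ij} ≠ ∗) = p_{ij} for every (i, j) (an entry equal to ∗ represents a missing observation; entries in {0,1} are one-bit observations generated by an arbitrary model). Let X̂ := f(A) for a measurable function f valued in n×n real matrices. If d ≥ c · n · (h(p) + p), then E[L(X, X̂)] ≥ D. -/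
open MeasureTheory ProbabilityTheory Matrix

noncomputable section

/-- `{0, 1, ∗}` is encoded as `Option Bool`, with `none` playing the role of a missing
observation `∗`; it carries the discrete σ-algebra. -/
instance optionBoolMeasurableSpace : MeasurableSpace (Option Bool) := ⊤

/-!
The off-diagonal block of a Gaussian Gram matrix is a product of two independent Gaussian matrices,
and its distance to a fixed target is controlled by exponential moments. Given one factor, such a
moment is a product of Gaussian averages of `exp (-c ‖L x - y‖²)`. As a function of `y` each average
is the Fourier transform of a positive function, so it is largest at `y = 0`, and there `L` may be
replaced by `L†`, which exchanges rows and columns. Adding the rows of the other factor one at a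
time, each row gains from its component orthogonal to the previous ones. Hence `Z Zᵀ` lies within
constant loss of any fixed matrix with probability at most `exp (-K n min(n, d))`, where `K` is as
large as we please.

By Markov's inequality, with probability at least `1 / 2` fewer than `2 n² p` entries are observed.
There are only `exp (O(n² (h(p) + p)))` such observation patterns, hence as many possible estimates,
and `n² (h(p) + p) = O(n min(n, d))`. A union bound over the estimates and Markov's inequality for
the loss finish the proof.
-/

section SqDistLaplace

variable {E F : Type*}
  [NormedAddCommGroup E] [InnerProductSpace ℝ E] [FiniteDimensional ℝ E]
  [MeasurableSpace E] [NormedAddCommGroup F] [InnerProductSpace ℝ F]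

/-- The Laplace transform at `c` of the squared distance from `y` to `L x`, for a standard Gaussian
vector `x`. For large `c` it is a smooth stand-in for the probability that `L x` is close to `y`. -/
def sqDistLaplace (c : ℝ) (L : E →L[ℝ] F) (y : F) : ℝ :=
  ∫ x, Real.exp (-(c * ‖L x - y‖ ^ 2)) ∂stdGaussian E

lemma exp_neg_mul_sq_le_one {c : ℝ} (hc : 0 ≤ c) (r : ℝ) : Real.exp (-(c * r ^ 2)) ≤ 1 :=
  Real.exp_le_one_iff.2 (neg_nonpos.2 (by positivity))

lemma integrable_exp_neg_mul_sq_of_nonneg {α : Type*} [MeasurableSpace α] {μ : Measure α}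
    [IsFiniteMeasure μ] {c : ℝ} (hc : 0 ≤ c) {r : α → ℝ} (hr : Measurable r) :
    Integrable (fun a ↦ Real.exp (-(c * r a ^ 2))) μ :=
  Integrable.of_bound (by fun_prop) 1 <| .of_forall fun a ↦ by
    simpa using exp_neg_mul_sq_le_one hc (r a)

lemma sqDistLaplace_nonneg (c : ℝ) (L : E →L[ℝ] F) (y : F) : 0 ≤ sqDistLaplace c L y :=
  integral_nonneg fun _ ↦ (Real.exp_pos _).le

variable [BorelSpace E]

lemma sqDistLaplace_le_one {c : ℝ} (hc : 0 ≤ c) (L : E →L[ℝ] F) (y : F) :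
    sqDistLaplace c L y ≤ 1 := by
  simpa [sqDistLaplace] using integral_mono_of_nonneg (μ := stdGaussian E)
    (.of_forall fun x ↦ (Real.exp_pos (-(c * ‖L x - y‖ ^ 2))).le) (integrable_const 1)
    (.of_forall fun x ↦ exp_neg_mul_sq_le_one hc ‖L x - y‖)

variable [FiniteDimensional ℝ F] [MeasurableSpace F] [BorelSpace F]

lemma charFun_stdGaussian_sqrt_smul {c : ℝ} (hc : 0 ≤ c) (t : E) :
    charFun (stdGaussian E) (√(2 * c) • t) = Real.exp (-(c * ‖t‖ ^ 2)) := by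
  rw [charFun_stdGaussian, norm_smul, Real.norm_of_nonneg (Real.sqrt_nonneg _)]
  norm_cast
  rw [mul_pow, Real.sq_sqrt (by positivity)]
  ring_nf

/-- Write `exp (-c ‖L x - y‖²)` as a Gaussian average of characters, swap the integrals, and
recognise the inner one as a characteristic function evaluated at `L† z`. -/
lemma sqDistLaplace_le_adjoint {c : ℝ} (hc : 0 ≤ c) (L : E →L[ℝ] F) (y : F) :
    sqDistLaplace c L y ≤ sqDistLaplace c L.adjoint 0 := by
  set s := √(2 * c)
  let e : E → F → ℂ := fun x z ↦ Complex.exp (inner ℝ z (s • (L x - y)) * Complex.I)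
  have he : Integrable (Function.uncurry e) ((stdGaussian E).prod (stdGaussian F)) :=
    .of_bound (by unfold e; fun_prop) 1 <| .of_forall fun p ↦ by
      simp [e, Function.uncurry, Complex.norm_exp_ofReal_mul_I]
  have inner_x (z : F) : ∫ x, e x z ∂stdGaussian E =
      Complex.exp (-(inner ℝ z (s • y) * Complex.I)) * Real.exp (-(c * ‖L.adjoint z - 0‖ ^ 2)) := by
    rw [sub_zero, ← charFun_stdGaussian_sqrt_smul hc, charFun_apply, ← integral_const_mul]
    refine integral_congr_ae (.of_forall fun x ↦ ?_)
    simp only [e, ← Complex.exp_add, s]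
    congr 1
    rw [inner_smul_right, inner_smul_right, inner_smul_right, inner_sub_right,
      ← L.adjoint_inner_left, real_inner_comm x]
    push_cast
    ring
  have swap : (sqDistLaplace c L y : ℂ) = ∫ z, ∫ x, e x z ∂stdGaussian E ∂stdGaussian F := by
    rw [← integral_integral_swap he, sqDistLaplace, ← integral_complex_ofReal]
    exact integral_congr_ae (.of_forall fun x ↦ by
      simp only [e, s, ← charFun_stdGaussian_sqrt_smul hc, charFun_apply])
  calc sqDistLaplace c L y = ‖(sqDistLaplace c L y : ℂ)‖ := by
        rw [Complex.norm_real, Real.norm_of_nonneg (sqDistLaplace_nonneg ..)]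
    _ ≤ ∫ z, ‖∫ x, e x z ∂stdGaussian E‖ ∂stdGaussian F := by
        rw [swap]; exact norm_integral_le_integral_norm _
    _ = sqDistLaplace c L.adjoint 0 := by
        simp_rw [inner_x, norm_mul, ← neg_mul, ← Complex.ofReal_neg, Complex.norm_exp_ofReal_mul_I,
          Complex.norm_real, Real.norm_of_nonneg (Real.exp_pos _).le, one_mul, sqDistLaplace,
          neg_mul]

lemma sqDistLaplace_le_zero {c : ℝ} (hc : 0 ≤ c) (L : E →L[ℝ] F) (y : F) :
    sqDistLaplace c L y ≤ sqDistLaplace c L 0 := by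
  simpa using (sqDistLaplace_le_adjoint hc L y).trans (sqDistLaplace_le_adjoint hc L.adjoint 0)

lemma sqDistLaplace_le_exp_mul {c : ℝ} (hc : 0 ≤ c) (L : E →L[ℝ] F) (y : F) :
    sqDistLaplace c L y ≤
      Real.exp (-(c * ‖L.rangeᗮ.starProjection y‖ ^ 2)) * sqDistLaplace c L 0 := by
  have pythagoras (x : E) : ‖L x - y‖ ^ 2 =
      ‖L.rangeᗮ.starProjection y‖ ^ 2 + ‖L x - L.range.starProjection y‖ ^ 2 := by
    have hx : L x ∈ L.range := LinearMap.mem_range_self _ x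
    rw [Submodule.norm_sq_eq_add_norm_sq_starProjection (L x - y) L.range, map_sub, map_sub,
      Submodule.starProjection_eq_self_iff.2 hx, Submodule.starProjection_orthogonal_apply_eq_zero,
      zero_sub, norm_neg, add_comm]
    exact hx
  calc sqDistLaplace c L y
      = Real.exp (-(c * ‖L.rangeᗮ.starProjection y‖ ^ 2)) *
          sqDistLaplace c L (L.range.starProjection y) := by
        simp_rw [sqDistLaplace, pythagoras, mul_add, neg_add, Real.exp_add, integral_const_mul]
    _ ≤ _ := by gcongr; exact sqDistLaplace_le_zero hc L _

lemma integral_gaussianReal_exp_neg_mul_sq {c : ℝ} (hc : 0 ≤ c) :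
    ∫ x, Real.exp (-(c * x ^ 2)) ∂gaussianReal 0 1 = (1 + 2 * c) ^ (-(1 / 2) : ℝ) := by
  rw [integral_gaussianReal_eq_integral_smul one_ne_zero]
  simp only [gaussianPDFReal, smul_eq_mul, mul_assoc, ← Real.exp_add, integral_const_mul]
  have (x : ℝ) : -(x - 0) ^ 2 / (2 * ((1 : NNReal) : ℝ)) + -(c * x ^ 2)
      = -(c + 1 / 2) * x ^ 2 := by
    push_cast; ring
  simp_rw [this, integral_gaussian]
  rw [Real.rpow_neg (by positivity), ← Real.sqrt_eq_rpow, ← Real.sqrt_inv, ← Real.sqrt_inv,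
    ← Real.sqrt_mul (by positivity)]
  congr 1
  push_cast
  field_simp
  ring

lemma integral_exp_neg_mul_norm_sq {c : ℝ} (hc : 0 ≤ c) :
    ∫ x, Real.exp (-(c * ‖x‖ ^ 2)) ∂stdGaussian E =
      (1 + 2 * c) ^ (-(Module.finrank ℝ E / 2) : ℝ) := by
  rw [← stdGaussian_map (stdOrthonormalBasis ℝ E).repr.symm, ← map_pi_eq_stdGaussian,
    integral_map (by fun_prop) (by fun_prop), integral_map (by fun_prop) (by fun_prop)]
  simp only [LinearIsometryEquiv.norm_map, EuclideanSpace.real_norm_sq_eq, Finset.mul_sum,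
    ← Finset.sum_neg_distrib, Real.exp_sum]
  rw [integral_fintype_prod_eq_pow (f := fun t ↦ Real.exp (-(c * t ^ 2))),
    integral_gaussianReal_exp_neg_mul_sq hc, Fintype.card_fin,
    ← Real.rpow_mul_natCast (by positivity)]
  ring_nf

lemma integral_exp_neg_mul_norm_sq_starProjection_le {c : ℝ} (hc : 0 ≤ c) (K : Submodule ℝ E) :
    ∫ x, Real.exp (-(c * ‖K.starProjection x‖ ^ 2)) ∂stdGaussian E ≤
      (1 + 2 * c) ^ (-(Module.finrank ℝ K / 2) : ℝ) := by
  have duality := sqDistLaplace_le_adjoint hc K.orthogonalProjectionOnto 0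
  simpa [sqDistLaplace, Submodule.adjoint_orthogonalProjectionOnto,
    ← integral_exp_neg_mul_norm_sq (E := K) hc] using duality

end SqDistLaplace

lemma measurePreserving_fin_cons {α : Type*} [MeasurableSpace α] (μ : Measure α) [SigmaFinite μ]
    (n : ℕ) :
    MeasurePreserving (fun p : α × (Fin n → α) ↦ (Fin.cons p.1 p.2 : Fin (n + 1) → α))
      (μ.prod (.pi fun _ ↦ μ)) (.pi fun _ ↦ μ) := by
  convert (measurePreserving_piFinSuccAbove (fun _ : Fin (n + 1) ↦ μ) 0).symm using 1
  ext p : 1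
  simp [MeasurableEquiv.piFinSuccAbove, Fin.consEquiv]

section Synthesis

variable {ι E : Type*} [Fintype ι] [NormedAddCommGroup E] [InnerProductSpace ℝ E]

/-- The synthesis operator `g ↦ ∑ i, g i • b i` of a finite family of vectors. Its adjoint sends
`x` to the inner products `⟪b i, x⟫`. -/
def synthesis (b : ι → E) : EuclideanSpace ℝ ι →L[ℝ] E :=
  ∑ i, (EuclideanSpace.proj i).smulRight (b i)

lemma synthesis_apply (b : ι → E) (g : EuclideanSpace ℝ ι) : synthesis b g = ∑ i, g i • b i := by
  simp [synthesis]

lemma adjoint_synthesis_apply [CompleteSpace E] (b : ι → E) (x : E) (i : ι) :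
    (synthesis b).adjoint x i = inner ℝ (b i) x := by
  classical
  simpa [synthesis_apply, Pi.single_apply, EuclideanSpace.inner_single_left] using
    (synthesis b).adjoint_inner_right (EuclideanSpace.single i 1) x

variable [FiniteDimensional ℝ E] [MeasurableSpace E] [BorelSpace E]

lemma measurable_sqDistLaplace_synthesis (c : ℝ) :
    Measurable fun b : ι → E ↦ sqDistLaplace c (synthesis b) 0 := by
  refine StronglyMeasurable.measurable (StronglyMeasurable.integral_prod_right
    (f := fun (b : ι → E) g ↦ Real.exp (-(c * ‖synthesis b g - 0‖ ^ 2))) ?_)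
  simp only [synthesis_apply, Function.uncurry_def]
  exact Measurable.stronglyMeasurable (by fun_prop)

lemma sqDistLaplace_synthesis_cons {c : ℝ} (hc : 0 ≤ c) {n : ℕ} (x : E) (b : Fin n → E) :
    sqDistLaplace c (synthesis (Fin.cons x b : Fin (n + 1) → E)) 0 =
      ∫ s, sqDistLaplace c (synthesis b) (-(s • x)) ∂gaussianReal 0 1 := by
  have hcons := measurePreserving_fin_cons (gaussianReal 0 1) n
  simp only [sqDistLaplace, ← map_pi_eq_stdGaussian]
  rw [integral_map (by fun_prop) (by fun_prop), ← hcons.map_eq,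
    integral_map hcons.aemeasurable (by fun_prop), integral_prod]
  · refine integral_congr_ae (.of_forall fun s ↦ ?_)
    beta_reduce
    rw [integral_map (by fun_prop) (by fun_prop)]
    simp [synthesis_apply, Fin.sum_univ_succ, add_comm]
  · exact integrable_exp_neg_mul_sq_of_nonneg hc (Measurable.norm (by
      have := hcons.measurable; fun_prop))

lemma sqDistLaplace_synthesis_cons_le {c : ℝ} (hc : 0 ≤ c) {n : ℕ} (x : E) (b : Fin n → E) :
    sqDistLaplace c (synthesis (Fin.cons x b : Fin (n + 1) → E)) 0 ≤
      (1 + 2 * (c * ‖(synthesis b).rangeᗮ.starProjection x‖ ^ 2)) ^ (-(1 / 2) : ℝ) *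
        sqDistLaplace c (synthesis b) 0 := by
  set P := (synthesis b).rangeᗮ.starProjection with hP
  calc sqDistLaplace c (synthesis (Fin.cons x b : Fin (n + 1) → E)) 0
      ≤ ∫ s, Real.exp (-(c * ‖P x‖ ^ 2 * s ^ 2)) * sqDistLaplace c (synthesis b) 0
          ∂gaussianReal 0 1 := by
        rw [sqDistLaplace_synthesis_cons hc]
        refine integral_mono_of_nonneg (.of_forall fun s ↦ sqDistLaplace_nonneg ..)
          ((integrable_exp_neg_mul_sq_of_nonneg (by positivity) measurable_id).mul_const _)
          (.of_forall fun s ↦ ?_)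
        have := sqDistLaplace_le_exp_mul hc (synthesis b) (-(s • x))
        rwa [← hP, map_neg, map_smul, norm_neg, norm_smul, mul_pow, Real.norm_eq_abs, sq_abs,
          mul_comm (s ^ 2), ← mul_assoc] at this
    _ = _ := by rw [integral_mul_const, integral_gaussianReal_exp_neg_mul_sq (by positivity)]

end Synthesis

section LaplaceMoment

/-- The `m`-th moment of the squared-norm Laplace transform of `∑ i, g i • b i`, for independent
standard Gaussian vectors `b i` in `E`, the transform being taken in the Gaussian weights `g`. -/
def laplaceMoment (E : Type*) [NormedAddCommGroup E] [InnerProductSpace ℝ E]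
    [FiniteDimensional ℝ E] [MeasurableSpace E] (c : ℝ) (m n : ℕ) : ℝ :=
  ∫ b : Fin n → E, sqDistLaplace c (synthesis b) 0 ^ m ∂.pi fun _ ↦ stdGaussian E

variable {E : Type*} [NormedAddCommGroup E] [InnerProductSpace ℝ E] [FiniteDimensional ℝ E]
  [MeasurableSpace E] [BorelSpace E]

lemma integrable_sqDistLaplace_synthesis_pow {c : ℝ} (hc : 0 ≤ c) (m n : ℕ) :
    Integrable (fun b : Fin n → E ↦ sqDistLaplace c (synthesis b) 0 ^ m)
      (.pi fun _ ↦ stdGaussian E) :=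
  .of_bound ((measurable_sqDistLaplace_synthesis c).pow_const m).aestronglyMeasurable 1 <|
    .of_forall fun b ↦ by
      simpa [abs_of_nonneg (sqDistLaplace_nonneg ..)] using
        pow_le_one₀ (sqDistLaplace_nonneg ..) (sqDistLaplace_le_one hc (synthesis b) 0)

lemma laplaceMoment_le_one {c : ℝ} (hc : 0 ≤ c) (m n : ℕ) : laplaceMoment E c m n ≤ 1 := by
  simpa [laplaceMoment] using integral_mono (integrable_sqDistLaplace_synthesis_pow (E := E) hc m n)
    (integrable_const 1)
    fun b ↦ pow_le_one₀ (sqDistLaplace_nonneg ..) (sqDistLaplace_le_one hc (synthesis b) 0)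

lemma one_add_two_mul_rpow_neg_le_one {s r : ℝ} (hs : 0 ≤ s) (hr : 0 ≤ r) :
    (1 + 2 * s) ^ (-r) ≤ 1 :=
  Real.rpow_le_one_of_one_le_of_nonpos (by linarith) (neg_nonpos.2 hr)

lemma integrable_one_add_mul_norm_sq_starProjection_rpow_neg {c r : ℝ} (hc : 0 ≤ c) (hr : 0 ≤ r)
    (K : Submodule ℝ E) :
    Integrable (fun x ↦ (1 + 2 * (c * ‖K.starProjection x‖ ^ 2)) ^ (-r)) (stdGaussian E) :=
  .of_bound (Measurable.pow_const (by fun_prop) _).aestronglyMeasurable 1 <| .of_forall fun x ↦ by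
    rw [Real.norm_of_nonneg (by positivity)]
    exact one_add_two_mul_rpow_neg_le_one (by positivity) hr

lemma laplaceMoment_succ {c : ℝ} (hc : 0 ≤ c) (m n : ℕ) :
    laplaceMoment E c m (n + 1) =
      ∫ b, ∫ x, sqDistLaplace c (synthesis (Fin.cons x b : Fin (n + 1) → E)) 0 ^ m ∂stdGaussian E
        ∂.pi fun _ ↦ stdGaussian E := by
  have hcons := measurePreserving_fin_cons (stdGaussian E) n
  have hint := integrable_sqDistLaplace_synthesis_pow (E := E) hc m (n + 1)
  rw [laplaceMoment, ← hcons.map_eq, integral_map hcons.aemeasurable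
    (hcons.map_eq ▸ hint.aestronglyMeasurable)]
  exact integral_prod_symm _ (hcons.integrable_comp_of_integrable hint)

lemma laplaceMoment_succ_le {c ρ : ℝ} (hc : 0 ≤ c) {m n : ℕ}
    (hρ : ∀ K : Submodule ℝ E, Module.finrank ℝ K ≤ n →
      ∫ x, (1 + 2 * (c * ‖Kᗮ.starProjection x‖ ^ 2)) ^ (-(m / 2) : ℝ) ∂stdGaussian E ≤ ρ) :
    laplaceMoment E c m (n + 1) ≤ ρ * laplaceMoment E c m n := by
  rw [laplaceMoment_succ hc, laplaceMoment, ← integral_const_mul]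
  refine integral_mono_of_nonneg
    (.of_forall fun b ↦ integral_nonneg fun x ↦ pow_nonneg (sqDistLaplace_nonneg ..) _)
    ((integrable_sqDistLaplace_synthesis_pow hc m n).const_mul _) (.of_forall fun b ↦ ?_)
  beta_reduce
  calc ∫ x, sqDistLaplace c (synthesis (Fin.cons x b : Fin (n + 1) → E)) 0 ^ m ∂stdGaussian E
      ≤ ∫ x, (1 + 2 * (c * ‖(synthesis b).rangeᗮ.starProjection x‖ ^ 2)) ^ (-(m / 2) : ℝ) *
          sqDistLaplace c (synthesis b) 0 ^ m ∂stdGaussian E := by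
        refine integral_mono_of_nonneg
          (.of_forall fun x ↦ pow_nonneg (sqDistLaplace_nonneg ..) _)
          ((integrable_one_add_mul_norm_sq_starProjection_rpow_neg hc (by positivity) _).mul_const
            _)
          (.of_forall fun x ↦ ?_)
        refine (pow_le_pow_left₀ (sqDistLaplace_nonneg ..)
          (sqDistLaplace_synthesis_cons_le hc x b) m).trans_eq ?_
        rw [mul_pow, ← Real.rpow_mul_natCast (by positivity)]
        ring_nf
    _ ≤ ρ * sqDistLaplace c (synthesis b) 0 ^ m := by
        rw [integral_mul_const]
        gcongr
        · exact pow_nonneg (sqDistLaplace_nonneg ..) _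
        · exact hρ _ ((LinearMap.finrank_range_le _).trans_eq (by simp))

lemma one_add_rpow_neg_le {c s τ μ r : ℝ} (hc : 0 ≤ c) (hs : 0 ≤ s) (hτ : 0 ≤ τ) (hμ : 0 ≤ μ)
    (hr : 0 ≤ r) :
    (1 + 2 * (c * s)) ^ (-r) ≤
      (1 + 2 * (c * τ)) ^ (-r) + Real.exp (μ * τ) * Real.exp (-(μ * s)) := by
  rcases le_total τ s with h | h
  · calc (1 + 2 * (c * s)) ^ (-r) ≤ (1 + 2 * (c * τ)) ^ (-r) :=
          Real.rpow_le_rpow_of_nonpos (by positivity) (by gcongr) (neg_nonpos.2 hr)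
      _ ≤ _ := le_add_of_nonneg_right (by positivity)
  · calc (1 + 2 * (c * s)) ^ (-r) ≤ 1 :=
          one_add_two_mul_rpow_neg_le_one (by positivity) hr
      _ ≤ Real.exp (μ * τ) * Real.exp (-(μ * s)) := by
          rw [← Real.exp_add]; apply Real.one_le_exp; nlinarith
      _ ≤ _ := le_add_of_nonneg_left (by positivity)

lemma integral_one_add_rpow_neg_le {c τ μ r : ℝ} (hc : 0 ≤ c) (hτ : 0 ≤ τ) (hμ : 0 ≤ μ)
    (hr : 0 ≤ r) (K : Submodule ℝ E) :
    ∫ x, (1 + 2 * (c * ‖K.starProjection x‖ ^ 2)) ^ (-r) ∂stdGaussian E ≤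
      (1 + 2 * (c * τ)) ^ (-r) +
        Real.exp (μ * τ) * (1 + 2 * μ) ^ (-(Module.finrank ℝ K / 2) : ℝ) := by
  have hint : Integrable (fun x ↦ Real.exp (-(μ * ‖K.starProjection x‖ ^ 2))) (stdGaussian E) :=
    integrable_exp_neg_mul_sq_of_nonneg hμ (by fun_prop)
  calc ∫ x, (1 + 2 * (c * ‖K.starProjection x‖ ^ 2)) ^ (-r) ∂stdGaussian E
      ≤ ∫ x, ((1 + 2 * (c * τ)) ^ (-r) +
          Real.exp (μ * τ) * Real.exp (-(μ * ‖K.starProjection x‖ ^ 2))) ∂stdGaussian E :=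
        integral_mono (integrable_one_add_mul_norm_sq_starProjection_rpow_neg hc hr K)
          ((integrable_const _).add (hint.const_mul _))
          fun x ↦ one_add_rpow_neg_le hc (by positivity) hτ hμ hr
    _ ≤ _ := by
        rw [integral_add (integrable_const _) (hint.const_mul _), integral_const_mul]
        simpa using mul_le_mul_of_nonneg_left
          (integral_exp_neg_mul_norm_sq_starProjection_le hμ K) (Real.exp_pos _).le

lemma laplaceMoment_succ_le_self {c : ℝ} (hc : 0 ≤ c) (m n : ℕ) :
    laplaceMoment E c m (n + 1) ≤ laplaceMoment E c m n := by
  rw [← one_mul (laplaceMoment E c m n)]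
  refine laplaceMoment_succ_le hc fun K _ ↦ ?_
  have hr : (0 : ℝ) ≤ m / 2 := by positivity
  calc ∫ x, (1 + 2 * (c * ‖Kᗮ.starProjection x‖ ^ 2)) ^ (-(m / 2) : ℝ) ∂stdGaussian E
      ≤ ∫ _, 1 ∂stdGaussian E :=
        integral_mono (integrable_one_add_mul_norm_sq_starProjection_rpow_neg hc hr _)
          (integrable_const 1) fun x ↦ one_add_two_mul_rpow_neg_le_one (by positivity) hr
    _ = 1 := by simp

lemma laplaceMoment_le_pow {c ρ : ℝ} (hc : 0 ≤ c) (hρ₀ : 0 ≤ ρ) {m n t : ℕ} (htn : t ≤ n)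
    (hρ : ∀ K : Submodule ℝ E, Module.finrank ℝ K < t →
      ∫ x, (1 + 2 * (c * ‖Kᗮ.starProjection x‖ ^ 2)) ^ (-(m / 2) : ℝ) ∂stdGaussian E ≤ ρ) :
    laplaceMoment E c m n ≤ ρ ^ t := by
  induction n generalizing t with
  | zero => simpa [Nat.le_zero.1 htn] using laplaceMoment_le_one hc m 0
  | succ n ih =>
    rcases htn.lt_or_eq with h | rfl
    · exact (laplaceMoment_succ_le_self hc m n).trans (ih (Nat.lt_succ_iff.1 h) hρ)
    · calc laplaceMoment E c m (n + 1) ≤ ρ * laplaceMoment E c m n :=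
            laplaceMoment_succ_le hc fun K hK ↦ hρ K (Nat.lt_succ_iff.2 hK)
        _ ≤ ρ * ρ ^ n := by gcongr; exact ih le_rfl fun K hK ↦ hρ K (hK.trans n.lt_succ_self)
        _ = ρ ^ (n + 1) := (pow_succ' ρ n).symm

lemma rpow_neg_le_exp_of_exp_le {b s r : ℝ} (hb : Real.exp b ≤ s) (hr : 0 ≤ r) :
    s ^ (-r) ≤ Real.exp (-(b * r)) := by
  rw [← mul_neg, Real.exp_mul]
  exact Real.rpow_le_rpow_of_nonpos (Real.exp_pos b) hb (neg_nonpos.2 hr)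

lemma exp_neg_add_one_mul_add_self_le (a : ℝ) {k : ℝ} (hk : 1 ≤ k) :
    Real.exp (-((a + 1) * k)) + Real.exp (-((a + 1) * k)) ≤ Real.exp (-(a * k)) :=
  calc Real.exp (-((a + 1) * k)) + Real.exp (-((a + 1) * k))
      ≤ Real.exp 1 * Real.exp (-((a + 1) * k)) := by
        rw [← two_mul]
        gcongr
        linarith [Real.add_one_le_exp 1]
    _ ≤ Real.exp (-(a * k)) := by
        rw [← Real.exp_add]
        gcongr
        linarith

/-- `τ` is chosen so that `‖K.starProjection x‖ ^ 2 ≤ τ` is exponentially unlikely, yet `c * τ` is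
still large. -/
lemma integral_one_add_rpow_neg_le_exp {a c : ℝ} (ha : 0 ≤ a) (hc : 0 ≤ c) {k m : ℕ} (hk : 1 ≤ k)
    (hkm : k ≤ m) (hkE : k ≤ Module.finrank ℝ E)
    (hcE : Real.exp (8 * a + 9) ≤ c * Module.finrank ℝ E)
    {K : Submodule ℝ E} (hK : Module.finrank ℝ E ≤ 2 * Module.finrank ℝ K) :
    ∫ x, (1 + 2 * (c * ‖K.starProjection x‖ ^ 2)) ^ (-(m / 2) : ℝ) ∂stdGaussian E ≤
      Real.exp (-(a * k)) := by
  set Q : ℝ := (Module.finrank ℝ K : ℝ)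
  have hk' : (1 : ℝ) ≤ k := mod_cast hk
  have hkm' : (k : ℝ) ≤ m := mod_cast hkm
  have hKE : (Module.finrank ℝ E : ℝ) ≤ 2 * Q := by
    simp only [Q]; exact_mod_cast hK
  have hkQ : (k : ℝ) ≤ 2 * Q := le_trans (mod_cast hkE) hKE
  set τ := Real.exp (-(4 * a + 5)) * Q
  set μ := Real.exp (4 * a + 5) / 2
  have hμτ : μ * τ = Q / 2 := by
    simp only [μ, τ, Real.exp_neg]
    field_simp
  have hcτ : Real.exp (4 * a + 4) ≤ 1 + 2 * (c * τ) :=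
    calc Real.exp (4 * a + 4) = Real.exp (-(4 * a + 5)) * Real.exp (8 * a + 9) := by
          rw [← Real.exp_add]; ring_nf
      _ ≤ Real.exp (-(4 * a + 5)) * (c * (2 * Q)) := by gcongr; exact hcE.trans (by gcongr)
      _ ≤ 1 + 2 * (c * τ) := by simp only [τ]; linarith
  calc ∫ x, (1 + 2 * (c * ‖K.starProjection x‖ ^ 2)) ^ (-(m / 2) : ℝ) ∂stdGaussian E
      ≤ (1 + 2 * (c * τ)) ^ (-(m / 2) : ℝ) + Real.exp (μ * τ) * (1 + 2 * μ) ^ (-(Q / 2)) :=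
        integral_one_add_rpow_neg_le hc (by positivity) (by positivity) (by positivity) K
    _ ≤ Real.exp (-((4 * a + 4) * (m / 2))) +
          Real.exp (Q / 2) * Real.exp (-((4 * a + 5) * (Q / 2))) := by
        rw [hμτ]
        gcongr
        · exact rpow_neg_le_exp_of_exp_le hcτ (by positivity)
        · exact rpow_neg_le_exp_of_exp_le (by simp only [μ]; linarith) (by positivity)
    _ ≤ Real.exp (-((a + 1) * k)) + Real.exp (-((a + 1) * k)) := by
        rw [← Real.exp_add]
        exact add_le_add (Real.exp_le_exp.2 (by nlinarith)) (Real.exp_le_exp.2 (by nlinarith))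
    _ ≤ Real.exp (-(a * k)) := exp_neg_add_one_mul_add_self_le a hk'

lemma laplaceMoment_le_exp {a c : ℝ} (ha : 0 ≤ a) (hc : 0 ≤ c) {k m n : ℕ} (hk : 1 ≤ k)
    (hkm : k ≤ m) (hkE : k ≤ Module.finrank ℝ E) (hnE : n ≤ Module.finrank ℝ E)
    (hcE : Real.exp (8 * a + 9) ≤ c * Module.finrank ℝ E) :
    laplaceMoment E c m n ≤ Real.exp (-(a / 2 * (k * n))) := by
  have step (K : Submodule ℝ E) (hK : Module.finrank ℝ K < (n + 1) / 2) :
      ∫ x, (1 + 2 * (c * ‖Kᗮ.starProjection x‖ ^ 2)) ^ (-(m / 2) : ℝ) ∂stdGaussian E ≤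
        Real.exp (-(a * k)) := by
    have := K.finrank_add_finrank_orthogonal
    exact integral_one_add_rpow_neg_le_exp ha hc hk hkm hkE hcE (by omega)
  have half : (n : ℝ) / 2 ≤ ((n + 1) / 2 : ℕ) := by
    have : (n : ℝ) ≤ 2 * ((n + 1) / 2 : ℕ) := mod_cast (by omega : n ≤ 2 * ((n + 1) / 2))
    linarith
  calc laplaceMoment E c m n
      ≤ Real.exp (-(a * k)) ^ ((n + 1) / 2) :=
        laplaceMoment_le_pow hc (Real.exp_pos _).le (by omega) step
    _ = Real.exp (-(a * k * ((n + 1) / 2 : ℕ))) := by rw [← Real.exp_nat_mul]; ring_nf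
    _ ≤ Real.exp (-(a / 2 * (k * n))) := by
        rw [Real.exp_le_exp, neg_le_neg_iff, show a / 2 * (k * n : ℝ) = a * k * (n / 2) by ring]
        gcongr

end LaplaceMoment

lemma measurePreserving_pi_curry {ι κ α : Type*} [Fintype ι] [Fintype κ] [MeasurableSpace α]
    (P : Measure α) [IsProbabilityMeasure P] :
    MeasurePreserving (MeasurableEquiv.curry ι κ α) (.pi fun _ ↦ P)
      (.pi fun _ ↦ .pi fun _ ↦ P) := by
  refine ⟨by fun_prop, ?_⟩
  simpa only [Measure.infinitePi_eq_pi] using Measure.infinitePi_map_curry fun (_ : ι) (_ : κ) ↦ P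

lemma measurePreserving_pi_flip {ι κ α : Type*} [Fintype ι] [Fintype κ] [MeasurableSpace α]
    (P : Measure α) [IsProbabilityMeasure P] :
    MeasurePreserving (fun (x : ι → κ → α) j i ↦ x i j) (.pi fun _ ↦ .pi fun _ ↦ P)
      (.pi fun _ ↦ .pi fun _ ↦ P) :=
  (measurePreserving_pi_curry P).comp <|
    (measurePreserving_piCongrLeft (fun _ : κ × ι ↦ P) (Equiv.prodComm ι κ)).comp
      (measurePreserving_pi_curry P).symm

section BilinearSmallBall

open WithLp

variable {ι κ : Type*} [Fintype ι] [Fintype κ]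

lemma measurePreserving_toLp_rows :
    MeasurePreserving (fun (G : ι → κ → ℝ) i ↦ toLp 2 (G i))
      (.pi fun _ ↦ .pi fun _ ↦ gaussianReal 0 1) (.pi fun _ ↦ stdGaussian (EuclideanSpace ℝ κ)) :=
  measurePreserving_pi _ _ fun _ ↦ ⟨by fun_prop, map_pi_eq_stdGaussian⟩

/-- The columns of the matrix whose rows are `b i`. -/
def columns (b : ι → EuclideanSpace ℝ κ) : κ → EuclideanSpace ℝ ι :=
  fun j ↦ toLp 2 fun i ↦ b i j

lemma adjoint_synthesis (b : ι → EuclideanSpace ℝ κ) :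
    (synthesis b).adjoint = synthesis (columns b) := by
  ext x i
  simp [adjoint_synthesis_apply, synthesis_apply, columns, PiLp.inner_apply]

lemma measurePreserving_columns :
    MeasurePreserving (columns (ι := ι) (κ := κ)) (.pi fun _ ↦ stdGaussian _)
      (.pi fun _ ↦ stdGaussian _) := by
  rw [← (measurePreserving_toLp_rows (ι := ι) (κ := κ)).map_eq]
  refine .map_of_comp ?_ (by unfold columns; fun_prop) measurePreserving_toLp_rows.measurable
  exact measurePreserving_toLp_rows.comp (measurePreserving_pi_flip (gaussianReal 0 1))

lemma laplaceMoment_le_laplaceMoment_columns {c : ℝ} (hc : 0 ≤ c) (d k m : ℕ) :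
    laplaceMoment (EuclideanSpace ℝ (Fin d)) c m k ≤
      laplaceMoment (EuclideanSpace ℝ (Fin k)) c m d := by
  have hcol := measurePreserving_columns (ι := Fin k) (κ := Fin d)
  have hint := integrable_sqDistLaplace_synthesis_pow (E := EuclideanSpace ℝ (Fin k)) hc m d
  calc laplaceMoment (EuclideanSpace ℝ (Fin d)) c m k
      ≤ ∫ b : Fin k → EuclideanSpace ℝ (Fin d), sqDistLaplace c (synthesis (columns b)) 0 ^ m
          ∂.pi fun _ ↦ stdGaussian _ := by
        refine integral_mono (integrable_sqDistLaplace_synthesis_pow hc m k)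
          (hcol.integrable_comp_of_integrable hint) fun b ↦ ?_
        exact pow_le_pow_left₀ (sqDistLaplace_nonneg ..)
          (adjoint_synthesis b ▸ sqDistLaplace_le_adjoint hc (synthesis b) 0) m
    _ = laplaceMoment (EuclideanSpace ℝ (Fin k)) c m d := by
        rw [laplaceMoment, ← hcol.map_eq, integral_map hcol.aemeasurable
          (hcol.map_eq ▸ hint.aestronglyMeasurable)]

lemma laplaceMoment_le_exp_min {a c : ℝ} (ha : 0 ≤ a) (hc : 0 ≤ c) {d k m : ℕ} (hk : 1 ≤ k)
    (hkm : k ≤ m) (hcE : Real.exp (8 * a + 9) ≤ c * (max k d : ℕ)) :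
    laplaceMoment (EuclideanSpace ℝ (Fin d)) c m k ≤
      Real.exp (-(a / 2 * (k * (min k d : ℕ)))) := by
  rcases le_total k d with h | h
  · rw [max_eq_right h] at hcE
    rw [min_eq_left h]
    exact laplaceMoment_le_exp ha hc hk hkm (by simpa) (by simpa) (by simpa)
  · rw [max_eq_left h] at hcE
    rw [min_eq_right h]
    exact (laplaceMoment_le_laplaceMoment_columns hc d k m).trans
      (laplaceMoment_le_exp ha hc hk hkm (by simp) (by simpa) (by simpa))

variable {E : Type*} [NormedAddCommGroup E] [InnerProductSpace ℝ E] [FiniteDimensional ℝ E]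
  [MeasurableSpace E] [BorelSpace E]

lemma integrable_exp_neg_mul_sum_sq {α : Type*} [MeasurableSpace α] {P : Measure α}
    [IsFiniteMeasure P] {c : ℝ} (hc : 0 ≤ c) {f : ι → κ → α → ℝ} (hf : ∀ l i, Measurable (f l i)) :
    Integrable (fun a ↦ Real.exp (-c * ∑ l, ∑ i, f l i a ^ 2)) P :=
  .of_bound (by fun_prop) 1 <| .of_forall fun a ↦ by
    rw [Real.norm_of_nonneg (Real.exp_pos _).le, Real.exp_le_one_iff, neg_mul]
    exact neg_nonpos.2 (by positivity)

lemma mgf_sum_sq_inner_sub_le {c : ℝ} (hc : 0 ≤ c) {k : ℕ} (y : ι → Fin k → ℝ) :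
    mgf (fun p : (ι → E) × (Fin k → E) ↦ ∑ l, ∑ i, (inner ℝ (p.2 i) (p.1 l) - y l i) ^ 2)
        ((Measure.pi fun _ ↦ stdGaussian E).prod (.pi fun _ ↦ stdGaussian E)) (-c) ≤
      laplaceMoment E c (Fintype.card ι) k := by
  have rows_indep (b : Fin k → E) :
      ∫ w : ι → E, Real.exp (-c * ∑ l, ∑ i, (inner ℝ (b i) (w l) - y l i) ^ 2)
        ∂.pi (fun _ ↦ stdGaussian E) =
      ∏ l, sqDistLaplace c (synthesis b).adjoint (toLp 2 (y l)) := by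
    simp_rw [sqDistLaplace, ← integral_fintype_prod_eq_prod, ← Real.exp_sum, Finset.mul_sum,
      EuclideanSpace.real_norm_sq_eq, PiLp.sub_apply, adjoint_synthesis_apply, Finset.mul_sum,
      ← Finset.sum_neg_distrib, neg_mul]
  rw [mgf, integral_prod_symm _ (integrable_exp_neg_mul_sum_sq hc (by fun_prop)), laplaceMoment]
  refine integral_mono_of_nonneg (.of_forall fun b ↦ integral_nonneg fun w ↦ (Real.exp_pos _).le)
    (integrable_sqDistLaplace_synthesis_pow hc _ k) (.of_forall fun b ↦ ?_)
  beta_reduce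
  rw [rows_indep, ← Finset.card_univ, ← Finset.prod_const]
  refine Finset.prod_le_prod (fun l _ ↦ sqDistLaplace_nonneg ..) fun l _ ↦ ?_
  simpa using sqDistLaplace_le_adjoint hc (synthesis b).adjoint (toLp 2 (y l))

lemma measureReal_sum_sq_inner_sub_le {b : ℝ} (hb : 0 ≤ b) {d k : ℕ} (hk : 1 ≤ k)
    (hkι : k ≤ Fintype.card ι) (y : ι → Fin k → ℝ) :
    ((Measure.pi fun _ : ι ↦ stdGaussian (EuclideanSpace ℝ (Fin d))).prod
      (.pi fun _ : Fin k ↦ stdGaussian (EuclideanSpace ℝ (Fin d)))).real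
        {p | ∑ l, ∑ i, (inner ℝ (p.2 i) (p.1 l) - y l i) ^ 2 ≤
          Real.exp (-(16 * b + 25)) * (k ^ 2 * d)} ≤
      Real.exp (-(b * (k * (min k d : ℕ)))) := by
  set c := Real.exp (16 * b + 25) / (max k d : ℕ)
  have hmax : ((max k d : ℕ) : ℝ) ≠ 0 := by positivity
  have hc : 0 ≤ c := by positivity
  have hmin : c * (Real.exp (-(16 * b + 25)) * (k ^ 2 * d)) = k * (min k d : ℕ) := by
    have : ((min k d : ℕ) : ℝ) * (max k d : ℕ) = k * d := mod_cast min_mul_max k d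
    simp only [c, Real.exp_neg]
    field_simp
    linear_combination -this
  refine (measure_le_le_exp_mul_mgf _ (neg_nonpos.2 hc)
    (integrable_exp_neg_mul_sum_sq hc (by fun_prop))).trans ?_
  calc _ ≤ Real.exp (k * (min k d : ℕ)) * Real.exp (-((2 + 2 * b) / 2 * (k * (min k d : ℕ)))) := by
        rw [neg_neg, hmin]
        gcongr
        refine (mgf_sum_sq_inner_sub_le hc y).trans
          (laplaceMoment_le_exp_min (by positivity) hc hk hkι ?_)
        rw [div_mul_cancel₀ _ hmax, Real.exp_le_exp]
        linarith
    _ = _ := by rw [← Real.exp_add]; ring_nf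

end BilinearSmallBall

lemma measurePreserving_fin_append {α : Type*} [MeasurableSpace α] (μ : Measure α) [SigmaFinite μ]
    (m n : ℕ) :
    MeasurePreserving (fun p : (Fin m → α) × (Fin n → α) ↦ Fin.append p.1 p.2)
      ((Measure.pi fun _ ↦ μ).prod (.pi fun _ ↦ μ)) (.pi fun _ ↦ μ) := by
  convert (measurePreserving_piCongrLeft (fun _ : Fin (m + n) ↦ μ) finSumFinEquiv).comp
    (measurePreserving_sumPiEquivProdPi_symm fun _ : Fin m ⊕ Fin n ↦ μ) using 1
  ext p i : 2
  refine Fin.addCases (fun i ↦ ?_) (fun i ↦ ?_) i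
  · simpa [MeasurableEquiv.coe_piCongrLeft, MeasurableEquiv.coe_sumPiEquivProdPi_symm] using
      (Equiv.piCongrLeft_apply_apply (fun _ : Fin (m + n) ↦ α) finSumFinEquiv
        ((Equiv.sumPiEquivProdPi _).symm p) (.inl i)).symm
  · simpa [MeasurableEquiv.coe_piCongrLeft, MeasurableEquiv.coe_sumPiEquivProdPi_symm] using
      (Equiv.piCongrLeft_apply_apply (fun _ : Fin (m + n) ↦ α) finSumFinEquiv
        ((Equiv.sumPiEquivProdPi _).symm p) (.inr i)).symm

section GramSmallBall

lemma sum_sq_offDiag_le_sum_sq {m k : ℕ} (M : Fin (m + k) → Fin (m + k) → ℝ) :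
    ∑ l, ∑ i, M (.castAdd k l) (.natAdd m i) ^ 2 ≤ ∑ i, ∑ j, M i j ^ 2 := by
  simp_rw [Fin.sum_univ_add, Finset.sum_add_distrib]
  have (a b c e : ℝ) (ha : 0 ≤ a) (hc : 0 ≤ c) (he : 0 ≤ e) : b ≤ a + b + (c + e) := by linarith
  apply this <;> positivity

variable {b : ℝ} {d : ℕ}

lemma measureReal_sum_sq_gram_sub_le_of_add (hb : 0 ≤ b) {m k : ℕ} (hk : 1 ≤ k) (hkm : k ≤ m)
    (y : Fin (m + k) → Fin (m + k) → ℝ) :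
    (Measure.pi fun _ : Fin (m + k) ↦ stdGaussian (EuclideanSpace ℝ (Fin d))).real
        {g | ∑ i, ∑ j, (inner ℝ (g i) (g j) - y i j) ^ 2 ≤
          Real.exp (-(16 * b + 25)) * (k ^ 2 * d)} ≤
      Real.exp (-(b * (k * (min k d : ℕ)))) := by
  rw [← (measurePreserving_fin_append (stdGaussian (EuclideanSpace ℝ (Fin d))) m k).map_eq,
    map_measureReal_apply (measurePreserving_fin_append (stdGaussian _) m k).measurable
      (measurableSet_le (by fun_prop) measurable_const)]
  refine (measureReal_mono fun p hp ↦ ?_).trans (measureReal_sum_sq_inner_sub_le hb hk (by simpa)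
    fun l i ↦ y (.castAdd k l) (.natAdd m i))
  simpa [real_inner_comm] using (sum_sq_offDiag_le_sum_sq _).trans hp

-- For `u`, `v` the rotation of `(x, x')` by `π / 4`, we have `‖x'‖² - ‖x‖² = 2 ⟪u, v⟫`.
lemma sq_measureReal_sq_norm_sq_sub_le {E : Type*} [NormedAddCommGroup E] [InnerProductSpace ℝ E]
    [FiniteDimensional ℝ E] [MeasurableSpace E] [BorelSpace E] (y r : ℝ) :
    (stdGaussian E).real {x | (‖x‖ ^ 2 - y) ^ 2 ≤ r} ^ 2 ≤
      ((stdGaussian E).prod (stdGaussian E)).real {p | inner ℝ p.2 p.1 ^ 2 ≤ r} := by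
  have inner_rotation (p : E × E) :
      inner ℝ (ContinuousLinearMap.rotation (Real.pi / 4) p).2
        (ContinuousLinearMap.rotation (Real.pi / 4) p).1 = (‖p.2‖ ^ 2 - ‖p.1‖ ^ 2) / 2 := by
    have : (√2 / 2) * (√2 / 2) = (1 / 2 : ℝ) := by
      rw [div_mul_div_comm, Real.mul_self_sqrt] <;> norm_num
    simp only [ContinuousLinearMap.rotation_apply, Real.cos_pi_div_four, Real.sin_pi_div_four,
      inner_add_left, inner_add_right, real_inner_smul_left, real_inner_smul_right]
    rw [real_inner_comm p.1 p.2, real_inner_self_eq_norm_sq, real_inner_self_eq_norm_sq]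
    linear_combination (‖p.2‖ ^ 2 - ‖p.1‖ ^ 2) * this
  rw [← IsGaussian.map_rotation_eq_self (μ := stdGaussian E) (by simp) (Real.pi / 4),
    map_measureReal_apply (by fun_prop) (measurableSet_le (by fun_prop) measurable_const), sq,
    ← measureReal_prod_prod]
  refine measureReal_mono fun p ⟨h₁, h₂⟩ ↦ ?_
  simp only [Set.mem_ofPred_eq, Set.mem_preimage, inner_rotation] at h₁ h₂ ⊢
  linarith [sq_nonneg ((‖p.2‖ ^ 2 - y) + (‖p.1‖ ^ 2 - y))]

lemma measureReal_sq_norm_sq_sub_le (hb : 0 ≤ b) (hd : 0 < d) (y : ℝ) :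
    (stdGaussian (EuclideanSpace ℝ (Fin d))).real
        {x | (‖x‖ ^ 2 - y) ^ 2 ≤ Real.exp (-(16 * b + 25)) * d} ≤ Real.exp (-b / 2) := by
  refine (pow_le_pow_iff_left₀ (by positivity) (by positivity) two_ne_zero).1 ?_
  rw [← Real.exp_nat_mul, Nat.cast_two, mul_div_cancel₀ _ two_ne_zero]
  refine (sq_measureReal_sq_norm_sq_sub_le ..).trans ?_
  have h := measurePreserving_eval (fun _ : Fin 1 ↦ stdGaussian (EuclideanSpace ℝ (Fin d))) 0
  have key := measureReal_sum_sq_inner_sub_le (ι := Fin 1) (d := d) hb le_rfl (by simp) 0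
  rw [← (h.prod h).map_eq,
    map_measureReal_apply (h.prod h).measurable (measurableSet_le (by fun_prop) measurable_const)]
  simpa [Set.preimage, Nat.min_eq_left hd] using key

/-- A loss level which the normalized Wishart matrix, measured against any fixed target, stays below
with probability at most `exp (-K n min(n, d))`. -/
def smallBallRadius (K : ℝ) : ℝ :=
  Real.exp (-(144 * K + 25)) / 12

lemma smallBallRadius_pos (K : ℝ) : 0 < smallBallRadius K := by
  unfold smallBallRadius
  positivity

lemma measureReal_sum_sq_gram_sub_le {K : ℝ} (hK : 0 ≤ K) {n : ℕ} (hn : 0 < n) (hd : 0 < d)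
    (y : Fin n → Fin n → ℝ) :
    (Measure.pi fun _ : Fin n ↦ stdGaussian (EuclideanSpace ℝ (Fin d))).real
        {g | ∑ i, ∑ j, (inner ℝ (g i) (g j) - y i j) ^ 2 ≤
          smallBallRadius K * (d * (n * (n + 1)))} ≤
      Real.exp (-(K * (n * (min n d : ℕ)))) := by
  have hexp : 144 * K + 25 = 16 * (9 * K) + 25 := by ring
  rw [smallBallRadius, hexp]
  obtain rfl | hn : n = 1 ∨ 2 ≤ n := by omega
  · have h := measurePreserving_eval (fun _ : Fin 1 ↦ stdGaussian (EuclideanSpace ℝ (Fin d))) 0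
    have key := measureReal_sq_norm_sq_sub_le (by positivity : 0 ≤ 9 * K) hd (y 0 0)
    rw [← h.map_eq, map_measureReal_apply h.measurable (measurableSet_le (by fun_prop)
      measurable_const)] at key
    refine (measureReal_mono fun g hg ↦ ?_).trans (key.trans (Real.exp_le_exp.2 ?_))
    · have : 0 ≤ Real.exp (-(16 * (9 * K) + 25)) * d := by positivity
      simp only [Set.mem_ofPred_eq, Set.mem_preimage, Function.eval, Fin.sum_univ_one,
        real_inner_self_eq_norm_sq, Nat.cast_one] at hg ⊢
      linarith
    · rw [Nat.min_eq_left hd, Nat.cast_one]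
      linarith
  · obtain ⟨m, k, hk, hkm, hmk, rfl⟩ : ∃ m k, 1 ≤ k ∧ k ≤ m ∧ m ≤ k + 1 ∧ n = m + k :=
      ⟨n - n / 2, n / 2, by omega⟩
    have hsize : (m + k) * (m + k + 1) ≤ 12 * k ^ 2 := by nlinarith
    have hrate : (m + k) * min (m + k) d ≤ 9 * (k * min k d) :=
      calc (m + k) * min (m + k) d ≤ 3 * k * (3 * min k d) := by gcongr <;> omega
        _ = 9 * (k * min k d) := by ring
    have key := measureReal_sum_sq_gram_sub_le_of_add (d := d) (by positivity : 0 ≤ 9 * K) hk hkm y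
    refine (measureReal_mono fun g hg ↦ ?_).trans (key.trans (Real.exp_le_exp.2 ?_))
    · rw [Set.mem_ofPred_eq] at hg ⊢
      refine hg.trans ?_
      rw [div_mul_eq_mul_div, mul_div_assoc]
      gcongr
      rify at hsize
      rw [div_le_iff₀ (by norm_num), Nat.cast_add]
      nlinarith
    · rify at hrate
      push_cast
      nlinarith

end GramSmallBall

lemma measurePreserving_gaussianMatrix (n d : ℕ) :
    MeasurePreserving (fun (g : Fin n → EuclideanSpace ℝ (Fin d)) ↦
      Matrix.of fun i j ↦ (√d)⁻¹ * g i j) (.pi fun _ ↦ stdGaussian _) (gaussianMatrix n d) := by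
  have hscale :
      MeasurePreserving ((√d)⁻¹ * ·) (gaussianReal 0 1) (gaussianReal 0 (d : NNReal)⁻¹) := by
    refine ⟨by fun_prop, ?_⟩
    rw [gaussianReal_map_const_mul]
    congr 1
    · simp
    · ext; simp
  rw [← measurePreserving_toLp_rows.map_eq]
  exact .map_of_comp (measurePreserving_pi _ _ fun _ ↦ measurePreserving_pi _ _ fun _ ↦ hscale)
    (measurable_pi_lambda _ fun i ↦ measurable_pi_lambda _ fun j ↦ by
      simp only [of_apply]; fun_prop)
    measurePreserving_toLp_rows.measurable

lemma measurable_gram {m n : Type*} [Fintype n] :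
    Measurable fun Z : Matrix m n ℝ ↦ Z * Zᵀ := by
  have (i : m) (a : n) : Measurable fun Z : Matrix m n ℝ ↦ Z i a :=
    (measurable_pi_apply a).comp (measurable_pi_apply i)
  refine measurable_pi_lambda _ fun i ↦ measurable_pi_lambda _ fun j ↦ ?_
  simp only [Matrix.mul_apply, transpose_apply]
  fun_prop

lemma measurable_lossL_left {n d : ℕ} (Y : Matrix (Fin n) (Fin n) ℝ) :
    Measurable fun X ↦ lossL n d X Y := by
  have (i j : Fin n) : Measurable fun X : Matrix (Fin n) (Fin n) ℝ ↦ X i j :=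
    (measurable_pi_apply j).comp (measurable_pi_apply i)
  unfold lossL frobSq
  fun_prop

lemma lossL_gram {n d : ℕ} (hd : 0 < d) (g : Fin n → EuclideanSpace ℝ (Fin d))
    (Y : Matrix (Fin n) (Fin n) ℝ) :
    let Z : Matrix (Fin n) (Fin d) ℝ := .of fun i j ↦ (√d)⁻¹ * g i j
    lossL n d (Z * Zᵀ) Y =
      (∑ i, ∑ j, (inner ℝ (g i) (g j) - d * Y i j) ^ 2) / (d * (n * (n + 1))) := by
  intro Z
  have hZ (i j : Fin n) : (Z * Zᵀ) i j - Y i j = (inner ℝ (g i) (g j) - d * Y i j) / d := by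
    have (a b : ℝ) : (√d)⁻¹ * a * ((√d)⁻¹ * b) = b * a / d := by
      rw [mul_mul_mul_comm, ← mul_inv, Real.mul_self_sqrt (by positivity)]
      ring
    simp only [Z, Matrix.mul_apply, transpose_apply, of_apply, PiLp.inner_apply, this,
      ← Finset.sum_div, RCLike.inner_apply, conj_trivial]
    field_simp
  simp_rw [lossL, frobSq, hZ, div_pow, ← Finset.sum_div]
  field_simp

lemma measurableSet_lossL_gram_le {n d : ℕ} (Y : Matrix (Fin n) (Fin n) ℝ) (r : ℝ) :
    MeasurableSet {Z : Matrix (Fin n) (Fin d) ℝ | lossL n d (Z * Zᵀ) Y ≤ r} :=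
  measurableSet_le ((measurable_lossL_left Y).comp measurable_gram) measurable_const

lemma measureReal_lossL_le {K : ℝ} (hK : 0 ≤ K) {n d : ℕ} (hn : 0 < n) (hd : 0 < d)
    (Y : Matrix (Fin n) (Fin n) ℝ) :
    (gaussianMatrix n d).real {Z | lossL n d (Z * Zᵀ) Y ≤ smallBallRadius K} ≤
      Real.exp (-(K * (n * (min n d : ℕ)))) := by
  have h := measurePreserving_gaussianMatrix n d
  have hsize : (0 : ℝ) < d * (n * (n + 1)) := by positivity
  rw [← h.map_eq, map_measureReal_apply h.measurable (measurableSet_lossL_gram_le Y _)]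
  simpa only [Set.preimage_ofPred_eq, lossL_gram hd, div_le_iff₀ hsize] using
    measureReal_sum_sq_gram_sub_le hK hn hd fun i j ↦ d * Y i j

section Patterns

variable {m n α : Type*} [Fintype m] [Fintype n]

/-- The number of observed entries of an observation matrix, `none` standing for a missing one. -/
def numObserved (a : Matrix m n (Option α)) : ℕ :=
  Finset.card {q : m × n | (a q.1 q.2).isSome}

lemma sum_pow_numObserved [DecidableEq m] [DecidableEq n] [Fintype α] (x : ℝ) :
    ∑ a : Matrix m n (Option α), x ^ numObserved a =
      (1 + Fintype.card α * x) ^ (Fintype.card m * Fintype.card n) := by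
  have weight (a : Matrix m n (Option α)) :
      x ^ numObserved a = ∏ i, ∏ j, if (a i j).isSome then x else 1 := by
    rw [← Fintype.prod_prod_type', Finset.prod_ite, Finset.prod_const, Finset.prod_const_one,
      mul_one, numObserved]
  simp_rw [weight]
  calc ∑ a : m → n → Option α, ∏ i, ∏ j, (if (a i j).isSome then x else 1)
      = ∏ _i : m, ∏ _j : n, ∑ o : Option α, if o.isSome then x else 1 := by
        simp_rw [Fintype.prod_sum]
    _ = _ := by simp [Fintype.sum_option, ← pow_mul, mul_comm]

lemma negMulLog_le_binEntropy {p : ℝ} (hp : 0 ≤ p) (hp1 : p ≤ 1) :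
    Real.negMulLog p ≤ Real.binEntropy p := by
  rw [Real.binEntropy_eq_negMulLog_add_negMulLog_one_sub]
  exact le_add_of_nonneg_right (Real.negMulLog_nonneg (sub_nonneg.2 hp1) (sub_le_self 1 hp))

-- Chernoff: weigh each pattern by `p ^ (number of observations)`.
lemma card_numObserved_lt_le [DecidableEq m] [DecidableEq n] [Fintype α] {p : ℝ} (hp : 0 < p)
    (hp1 : p ≤ 1) :
    (Finset.card {a : Matrix m n (Option α) |
        numObserved a < 2 * (Fintype.card m * Fintype.card n * p)} : ℝ) ≤
      Real.exp ((Fintype.card α + 2) *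
        (Fintype.card m * Fintype.card n * (Real.binEntropy p + p))) := by
  set N : ℝ := Fintype.card m * Fintype.card n
  have chernoff (a : Matrix m n (Option α)) (ha : numObserved a < 2 * (N * p)) :
      p ^ (2 * (N * p)) ≤ p ^ numObserved a := by
    rw [← Real.rpow_natCast]
    exact Real.rpow_le_rpow_of_exponent_ge hp hp1 ha.le
  have total : (1 + Fintype.card α * p) ^ (Fintype.card m * Fintype.card n) ≤
      Real.exp (Fintype.card α * (N * p)) := by
    calc _ ≤ Real.exp (Fintype.card α * p) ^ (Fintype.card m * Fintype.card n) := by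
          gcongr
          rw [add_comm]
          exact Real.add_one_le_exp _
      _ = _ := by rw [← Real.exp_nat_mul]; congr 1; push_cast; ring
  have : 0 ≤ N := by positivity
  calc _ ≤ Real.exp (Fintype.card α * (N * p)) / p ^ (2 * (N * p)) := by
        rw [le_div_iff₀ (by positivity), ← nsmul_eq_mul, ← Finset.sum_const]
        refine (Finset.sum_le_sum fun a ha ↦ chernoff a (Finset.mem_filter.1 ha).2).trans ?_
        refine (Finset.sum_le_univ_sum_of_nonneg fun a ↦ by positivity).trans ?_
        exact (sum_pow_numObserved p).trans_le total
    _ = Real.exp (Fintype.card α * (N * p) + 2 * (N * p.negMulLog)) := by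
        rw [Real.rpow_def_of_pos hp, ← Real.exp_sub, Real.negMulLog]
        ring_nf
    _ ≤ _ := by
        have h0 := Real.binEntropy_nonneg hp.le hp1
        have h1 := negMulLog_le_binEntropy hp.le hp1
        rw [Real.exp_le_exp]
        calc _ ≤ Fintype.card α * (N * (Real.binEntropy p + p)) +
              2 * (N * (Real.binEntropy p + p)) := by gcongr <;> linarith
          _ = _ := by ring

lemma measureReal_two_mul_le_numObserved_le {Ω : Type*} [MeasurableSpace Ω] {μ : Measure Ω}
    [IsFiniteMeasure μ] {A : Ω → Matrix m n (Option α)}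
    (hA : ∀ i j, MeasurableSet {ω | A ω i j ≠ none}) {s : ℝ} (hs : 0 < s)
    (hsum : ∑ i, ∑ j, μ.real {ω | A ω i j ≠ none} = s) :
    μ.real {ω | 2 * s ≤ numObserved (A ω)} ≤ 1 / 2 := by
  have count (ω : Ω) : (numObserved (A ω) : ℝ) =
      ∑ q : m × n, {ω | A ω q.1 q.2 ≠ none}.indicator (fun _ ↦ (1 : ℝ)) ω := by
    simp [numObserved, Set.indicator_apply, Finset.sum_ite, Option.isSome_iff_ne_none]
  have hint (q : m × n) :
      Integrable ({ω | A ω q.1 q.2 ≠ none}.indicator fun _ ↦ (1 : ℝ)) μ :=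
    (integrable_const 1).indicator (hA ..)
  have mean : ∫ ω, (numObserved (A ω) : ℝ) ∂μ = s := by
    simp_rw [count, integral_finsetSum _ fun q _ ↦ hint q, integral_indicator_const _ (hA _ _),
      smul_eq_mul, mul_one, Fintype.sum_prod_type, hsum]
  have markov := mul_meas_ge_le_integral_of_nonneg (μ := μ)
    (f := fun ω ↦ (numObserved (A ω) : ℝ)) (.of_forall fun ω ↦ Nat.cast_nonneg _)
    (by simpa only [count] using integrable_finsetSum _ fun q _ ↦ hint q) (2 * s)
  rw [mean] at markov
  exact le_of_mul_le_mul_left (by linarith) hs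

lemma mul_self_mul_binEntropy_add_le {c : ℝ} (hc : 0 < c) {p : ℝ} (hp1 : p ≤ 1) {n d : ℕ}
    (hd : c * n * (Real.binEntropy p + p) ≤ d) :
    (n * n * (Real.binEntropy p + p) : ℝ) ≤ max (1 / c) 2 * (n * (min n d : ℕ)) := by
  rcases le_total n d with h | h
  · have : Real.binEntropy p + p ≤ 2 := by
      linarith [Real.binEntropy_le_log_two (p := p), Real.log_two_lt_d9]
    rw [min_eq_left h]
    calc _ ≤ (n * n * 2 : ℝ) := by gcongr
      _ = 2 * (n * n) := by ring
      _ ≤ _ := by gcongr; exact le_max_right _ _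
  · rw [min_eq_right h]
    calc (n * n * (Real.binEntropy p + p) : ℝ)
        = 1 / c * (n * (c * n * (Real.binEntropy p + p))) := by field_simp
      _ ≤ 1 / c * (n * d) := by gcongr
      _ ≤ _ := by gcongr; exact le_max_left _ _

end Patterns

section Estimation

variable {Ω : Type*} [MeasurableSpace Ω] {μ : Measure Ω}

lemma mul_one_sub_measureReal_le_integral [IsProbabilityMeasure μ] {f : Ω → ℝ} (hf : 0 ≤ f)
    (hint : Integrable f μ) {r : ℝ} (hr : 0 ≤ r) :
    r * (1 - μ.real {ω | f ω ≤ r}) ≤ ∫ ω, f ω ∂μ := by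
  refine le_trans ?_ (mul_meas_ge_le_integral_of_nonneg (.of_forall hf) hint r)
  gcongr
  have cover : Set.univ ⊆ {ω | f ω ≤ r} ∪ {ω | r ≤ f ω} := fun ω _ ↦ le_total (f ω) r
  have := (measureReal_mono (μ := μ) cover).trans (measureReal_union_le _ _)
  rw [probReal_univ] at this
  linarith

lemma measureReal_setOf_mem_le [IsFiniteMeasure μ] {β : Type*} (A : Ω → β) (S : Finset β)
    (E : β → Set Ω) {q : ℝ} (hE : ∀ a ∈ S, μ.real (E a) ≤ q) :
    μ.real {ω | ω ∈ E (A ω)} ≤ μ.real {ω | A ω ∉ S} + S.card * q := by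
  have cover : {ω | ω ∈ E (A ω)} ⊆ {ω | A ω ∉ S} ∪ ⋃ a ∈ S, E a := fun ω hω ↦ by
    by_cases h : A ω ∈ S
    · exact .inr (Set.mem_biUnion h hω)
    · exact .inl h
  refine (measureReal_mono cover).trans <| (measureReal_union_le _ _).trans ?_
  gcongr
  refine (measureReal_biUnion_finset_le _ _).trans ?_
  simpa using Finset.sum_le_card_nsmul S _ q hE

variable {n d : ℕ}

lemma lossL_nonneg (X Y : Matrix (Fin n) (Fin n) ℝ) : 0 ≤ lossL n d X Y := by
  unfold lossL frobSq
  positivity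

lemma integrable_lossL {X Y : Ω → Matrix (Fin n) (Fin n) ℝ}
    (hX : ∀ i j, MemLp (fun ω ↦ X ω i j) 2 μ) (hY : ∀ i j, MemLp (fun ω ↦ Y ω i j) 2 μ) :
    Integrable (fun ω ↦ lossL n d (X ω) (Y ω)) μ :=
  .const_mul (integrable_finsetSum _ fun i _ ↦ integrable_finsetSum _ fun j _ ↦
    ((hX i j).sub (hY i j)).integrable_sq) _

instance : IsProbabilityMeasure (gaussianMatrix n d) :=
  inferInstanceAs (IsProbabilityMeasure (Measure.pi fun _ ↦ Measure.pi fun _ ↦ gaussianReal 0 _))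

lemma memLp_gram_gaussianMatrix (i j : Fin n) :
    MemLp (fun Z : Matrix (Fin n) (Fin d) ℝ ↦ (Z * Zᵀ) i j) 2 (gaussianMatrix n d) := by
  have entry (i : Fin n) (a : Fin d) :
      MemLp (fun Z : Matrix (Fin n) (Fin d) ℝ ↦ Z i a) 4 (gaussianMatrix n d) :=
    (memLp_id_gaussianReal' 4 (by norm_num)).comp_measurePreserving <|
      (measurePreserving_eval (fun _ ↦ gaussianReal 0 _) a).comp
        (measurePreserving_eval (fun _ ↦ .pi fun _ ↦ gaussianReal 0 _) i)
  have : ENNReal.HolderTriple 4 4 2 := ⟨by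
    rw [← ENNReal.toReal_eq_toReal_iff' (by finiteness) (by finiteness),
      ENNReal.toReal_add (by finiteness) (by finiteness)]
    norm_num⟩
  simp only [Matrix.mul_apply, transpose_apply]
  exact memLp_finsetSum _ fun a _ ↦ (entry j a).mul (entry i a)

variable {α : Type*} {Z : Ω → Matrix (Fin n) (Fin d) ℝ}
  {A : Ω → Matrix (Fin n) (Fin n) (Option α)}

lemma measureReal_lossL_gram_le [Fintype α] {c : ℝ} (hc : 0 < c) (hn : 0 < n)
    (hd : 0 < d) {p : ℝ} (hp : 0 < p) (hp1 : p ≤ 1) (hdp : c * n * (Real.binEntropy p + p) ≤ d)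
    (hZ : HasLaw Z (gaussianMatrix n d) μ)
    (hA : ∀ i j, MeasurableSet {ω | A ω i j ≠ none})
    (hobs : ∑ i, ∑ j, μ.real {ω | A ω i j ≠ none} = n ^ 2 * p)
    (f : Matrix (Fin n) (Fin n) (Option α) → Matrix (Fin n) (Fin n) ℝ) :
    μ.real {ω | lossL n d (Z ω * (Z ω)ᵀ) (f (A ω)) ≤
      smallBallRadius ((Fintype.card α + 2) * max (1 / c) 2 + Real.log 4)} ≤ 3 / 4 := by
  have := hZ.isProbabilityMeasure
  set B := (Fintype.card α + 2) * max (1 / c) 2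
  set r := (n * (min n d : ℕ) : ℝ)
  let S : Finset (Matrix (Fin n) (Fin n) (Option α)) := {a | numObserved a < 2 * (n * n * p)}
  have many : μ.real {ω | A ω ∉ S} ≤ 1 / 2 := by
    simpa [S] using measureReal_two_mul_le_numObserved_le hA (by positivity) (hobs.trans (by ring))
  have few : (S.card : ℝ) ≤ Real.exp (B * r) := by
    have := card_numObserved_lt_le (m := Fin n) (n := Fin n) (α := α) hp hp1
    simp only [Fintype.card_fin] at this
    refine this.trans (Real.exp_le_exp.2 ?_)
    calc _ ≤ (Fintype.card α + 2) * (max (1 / c) 2 * r) :=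
          mul_le_mul_of_nonneg_left (mul_self_mul_binEntropy_add_le hc hp1 hdp) (by positivity)
      _ = B * r := (mul_assoc ..).symm
  have small (Y : Matrix (Fin n) (Fin n) ℝ) :=
    (hZ.measureReal_eq (measurableSet_lossL_gram_le Y _)).trans_le
      (measureReal_lossL_le (K := B + Real.log 4) (by positivity) hn hd Y)
  have hr : 1 ≤ r := Nat.one_le_cast.2 (Nat.mul_pos hn (lt_min hn hd)) |>.trans_eq (by simp [r])
  have hlog : 0 ≤ Real.log 4 := Real.log_nonneg (by norm_num)
  calc _ ≤ 1 / 2 + Real.exp (B * r) * Real.exp (-((B + Real.log 4) * r)) := by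
        refine (measureReal_setOf_mem_le A S _ fun a _ ↦ small (f a)).trans ?_
        gcongr
    _ = 1 / 2 + Real.exp (-(Real.log 4 * r)) := by rw [← Real.exp_add]; ring_nf
    _ ≤ 1 / 2 + Real.exp (-Real.log 4) := by gcongr; exact le_mul_of_one_le_right hlog hr
    _ = 3 / 4 := by rw [Real.exp_neg, Real.exp_log (by norm_num)]; norm_num

lemma integrable_lossL_gram [Finite α] [MeasurableSpace (Option α)]
    [MeasurableSingletonClass (Option α)] (hZ : HasLaw Z (gaussianMatrix n d) μ) (hA : Measurable A)
    (f : Matrix (Fin n) (Fin n) (Option α) → Matrix (Fin n) (Fin n) ℝ) :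
    Integrable (fun ω ↦ lossL n d (Z ω * (Z ω)ᵀ) (f (A ω))) μ := by
  have := hZ.isProbabilityMeasure
  have : DiscreteMeasurableSpace (Matrix (Fin n) (Fin n) (Option α)) :=
    inferInstanceAs (DiscreteMeasurableSpace (Fin n → Fin n → Option α))
  have : Finite (Matrix (Fin n) (Fin n) (Option α)) := inferInstance
  refine integrable_lossL (fun i j ↦ ?_) fun i j ↦ ?_
  · exact (hZ.map_eq ▸ memLp_gram_gaussianMatrix i j).comp_of_map hZ.aemeasurable
  · exact (MemLp.of_discrete (f := fun a ↦ f a i j)).comp_of_map hA.aemeasurable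

end Estimation

theorem one_bit_matrix_completion_impossible_general (α : Type*) [Finite α]
    [MeasurableSpace (Option α)] [MeasurableSingletonClass (Option α)] {c : ℝ} (hc : 0 < c) :
    ∃ D : ℝ, 0 < D ∧
      ∀ n d : ℕ, 0 < n → 0 < d → ∀ p : ℝ, 0 < p → p ≤ 1 → c * n * (Real.binEntropy p + p) ≤ d →
        ∀ (Ω : Type*) [MeasurableSpace Ω] (μ : Measure Ω) (Z : Ω → Matrix (Fin n) (Fin d) ℝ)
          (A : Ω → Matrix (Fin n) (Fin n) (Option α))
          (f : Matrix (Fin n) (Fin n) (Option α) → Matrix (Fin n) (Fin n) ℝ),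
          HasLaw Z (gaussianMatrix n d) μ → Measurable A →
          ∑ i, ∑ j, μ.real {ω | A ω i j ≠ none} = n ^ 2 * p →
          D ≤ ∫ ω, lossL n d (Z ω * (Z ω)ᵀ) (f (A ω)) ∂μ := by
  have := Fintype.ofFinite α
  set r := smallBallRadius ((Fintype.card α + 2) * max (1 / c) 2 + Real.log 4)
  have hr : 0 < r := smallBallRadius_pos _
  refine ⟨r / 4, by positivity, fun n d hn hd p hp hp1 hdp Ω _ μ Z A f hZ hA hobs ↦ ?_⟩
  have := hZ.isProbabilityMeasure
  have hobserved (i j) : MeasurableSet {ω | A ω i j ≠ none} := by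
    have : Measurable fun ω ↦ A ω i j := (measurable_pi_iff.1 (measurable_pi_iff.1 hA i)) j
    exact this (measurableSet_singleton none).compl
  have small := measureReal_lossL_gram_le hc hn hd hp hp1 hdp hZ hobserved hobs f
  have markov := mul_one_sub_measureReal_le_integral (fun ω ↦ lossL_nonneg _ _)
    (integrable_lossL_gram hZ hA f) hr.le
  refine le_trans ?_ markov
  nlinarith

/-- **Impossibility for one-bit matrix completion with a Wishart prior.**
For every `c > 0` there is `D = D(c) > 0` such that: for all positive `n, d`,
`p ∈ (0,1)` and observation probabilities `pm i j ∈ [0,1]` with `Σ_{i,j} pm i j = n² p`,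
any probability space `(Ω, μ)`, any `Z : Ω → ℝ^{n×d}` with i.i.d. `N(0,1/d)` entries
(so `X = Z Zᵀ` has the Wishart prior), any randomness `U` independent of `Z`, any
observation `A = F(X, U)` valued in `{0,1,∗}^{n×n}` with `P(A_{ij} ≠ ∗) = pm i j` for
all `i, j`, and any estimator `X̂ = f(A)`: if `d ≥ c · n · (h(p) + p)` then
`E[L(X, X̂)] ≥ D`. -/
theorem one_bit_matrix_completion_impossible :
    ∀ c : ℝ, 0 < c → ∃ D : ℝ, 0 < D ∧
      ∀ (n d : ℕ), 0 < n → 0 < d → ∀ p : ℝ, 0 < p → p < 1 →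
        ∀ pm : Fin n → Fin n → ℝ, (∀ i j, 0 ≤ pm i j) → (∀ i j, pm i j ≤ 1) →
          (∑ i : Fin n, ∑ j : Fin n, pm i j) = (n : ℝ) ^ 2 * p →
          ∀ (Ω : Type) (_ : MeasurableSpace Ω) (μ : Measure Ω), IsProbabilityMeasure μ →
            ∀ (β : Type) (_ : MeasurableSpace β)
              (Z : Ω → Matrix (Fin n) (Fin d) ℝ) (U : Ω → β)
              (F : Matrix (Fin n) (Fin n) ℝ → β → Matrix (Fin n) (Fin n) (Option Bool))
              (f : Matrix (Fin n) (Fin n) (Option Bool) → Matrix (Fin n) (Fin n) ℝ),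
              Measurable Z → Measurable U →
              Measurable (fun q : Matrix (Fin n) (Fin n) ℝ × β => F q.1 q.2) →
              Measurable f →
              μ.map Z = gaussianMatrix n d →
              IndepFun Z U μ →
              (∀ i j, μ {ω | F (Z ω * (Z ω)ᵀ) (U ω) i j ≠ none} = ENNReal.ofReal (pm i j)) →
              (d : ℝ) ≥ c * n * (Real.binEntropy p + p) →
              D ≤ ∫ ω, lossL n d (Z ω * (Z ω)ᵀ) (f (F (Z ω * (Z ω)ᵀ) (U ω))) ∂μ := by
  intro c hc
  obtain ⟨D, hD, h⟩ := one_bit_matrix_completion_impossible_general Bool hc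
  refine ⟨D, hD, fun n d hn hd p hp hp1 pm hpm _ hsum Ω _ μ _ β _ Z U F f hZ hU hF _ hlaw _ hobs
    hdp ↦ h n d hn hd p hp hp1.le hdp Ω μ Z _ f ⟨hZ.aemeasurable, hlaw⟩ ?_ ?_⟩
  · exact hF.comp ((measurable_gram.comp hZ).prodMk hU)
  · simpa [measureReal_def, hobs, hpm] using hsum

end
end

section
/- For every positive integer d: d − 2·(Γ((d+1)/2) / Γ(d/2))² ≤ 1/2, where Γ is the real Gamma function. Equivalently, if w is a random vector in ℝ^d with i.i.d. N(0, 1/d) coordinates, then the variance of the Euclidean norm ‖w‖₂ equals (1/d)·(d − 2 Γ((d+1)/2)² / Γ(d/2)²) and is at most 1/(2d). -/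
/-!
Polar coordinates turn the moments of the norm of a standard Gaussian vector in an `n`-dimensional
space into Gamma integrals: with `R(x) = Γ(x + 1/2) / Γ(x)`, the mean of the norm is `√2 R(n/2)`
and its second moment is `n`, so its variance is `n - 2 R(n/2)²`. A centred Gaussian vector with
independent coordinates of variance `v` is `√v` times a standard one, which multiplies the variance
of the norm by `v`.

It remains to see that `R(x)² ≥ x - 1/4`, where only `x > 1/4` matters. Log-convexity of `Γ` gives
`R(x)² ≤ x`, and applying this at `x + 1/2` in `R(x) R(x + 1/2) = x` gives `R(x)² ≥ x - 1/2`; so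
`R(x + n)² / (x + n - 1/4)` tends to `1` as `n → ∞`. By the functional equation of `Γ` this quotient
decreases in `n`, so it is at least `1` already at `n = 0`.
-/

open MeasureTheory ProbabilityTheory

noncomputable section

/-- Law of a random vector in `ℝ^d` with i.i.d. `N(0, 1/d)` coordinates. -/
def gaussianVec (d : ℕ) : Measure (Fin d → ℝ) :=
  Measure.pi fun _ : Fin d => gaussianReal 0 (d : NNReal)⁻¹

section GammaRatio

open Filter Topology

/-- The ratio `Γ(x + 1/2) / Γ(x)`. At `x = d/2` it is, up to the factor `√2`, the mean of the chi
distribution with `d` degrees of freedom. -/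
def gammaRatio (x : ℝ) : ℝ := Real.Gamma (x + 1 / 2) / Real.Gamma x

lemma gammaRatio_half (x : ℝ) :
    gammaRatio (x / 2) = Real.Gamma ((x + 1) / 2) / Real.Gamma (x / 2) := by
  rw [gammaRatio, add_div]

variable {x : ℝ}

lemma gammaRatio_add_one (hx : 0 < x) : gammaRatio (x + 1) = (x + 1 / 2) / x * gammaRatio x := by
  rw [gammaRatio, gammaRatio, add_right_comm, Real.Gamma_add_one (by positivity),
    Real.Gamma_add_one hx.ne', mul_div_mul_comm]

lemma gammaRatio_mul_gammaRatio_add_half (hx : 0 < x) :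
    gammaRatio x * gammaRatio (x + 1 / 2) = x := by
  have hΓ : Real.Gamma (x + 1 / 2) ≠ 0 := (Real.Gamma_pos_of_pos (by positivity)).ne'
  rw [gammaRatio, gammaRatio, add_assoc, add_halves, mul_comm, div_mul_div_cancel₀ hΓ,
    Real.Gamma_add_one hx.ne', mul_div_cancel_right₀ _ (Real.Gamma_pos_of_pos hx).ne']

lemma sq_gammaRatio_le (hx : 0 < x) : gammaRatio x ^ 2 ≤ x := by
  have hΓ : 0 < Real.Gamma x := Real.Gamma_pos_of_pos hx
  have log_convex : Real.Gamma (x + 1 / 2) ≤ √(Real.Gamma x * Real.Gamma (x + 1)) := by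
    have h := Real.Gamma_mul_add_mul_le_rpow_Gamma_mul_rpow_Gamma hx (by positivity : 0 < x + 1)
      one_half_pos one_half_pos (add_halves 1)
    rwa [← Real.mul_rpow hΓ.le (Real.Gamma_nonneg_of_nonneg (by positivity)),
      ← Real.sqrt_eq_rpow, show 1 / 2 * x + 1 / 2 * (x + 1) = x + 1 / 2 by ring] at h
  rw [gammaRatio, div_pow, div_le_iff₀ (by positivity)]
  calc Real.Gamma (x + 1 / 2) ^ 2
      ≤ Real.Gamma x * Real.Gamma (x + 1) :=
        (Real.le_sqrt' (Real.Gamma_pos_of_pos (by positivity))).1 log_convex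
    _ = x * Real.Gamma x ^ 2 := by rw [Real.Gamma_add_one hx.ne']; ring

lemma sub_half_le_sq_gammaRatio (hx : 0 < x) : x - 1 / 2 ≤ gammaRatio x ^ 2 := by
  have hprod : x ^ 2 = gammaRatio x ^ 2 * gammaRatio (x + 1 / 2) ^ 2 := by
    rw [← mul_pow, gammaRatio_mul_gammaRatio_add_half hx]
  have hupper : gammaRatio (x + 1 / 2) ^ 2 ≤ x + 1 / 2 := sq_gammaRatio_le (by positivity)
  have hmul : x ^ 2 ≤ gammaRatio x ^ 2 * (x + 1 / 2) := by rw [hprod]; gcongr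
  refine le_of_mul_le_mul_right ?_ (by positivity : 0 < x + 1 / 2)
  linarith [show (x - 1 / 2) * (x + 1 / 2) = x ^ 2 - 1 / 4 by ring]

lemma sq_gammaRatio_add_one_div_le (hx : 1 / 4 < x) :
    gammaRatio (x + 1) ^ 2 / (x + 1 - 1 / 4) ≤ gammaRatio x ^ 2 / (x - 1 / 4) := by
  have hx₀ : 0 < x := by linarith
  have hfactor : ((x + 1 / 2) / x) ^ 2 * (x - 1 / 4) ≤ x + 1 - 1 / 4 := by
    rw [div_pow, div_mul_eq_mul_div, div_le_iff₀ (by positivity)]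
    linarith [show (x + 1 / 2) ^ 2 * (x - 1 / 4) = (x + 1 - 1 / 4) * x ^ 2 - 1 / 16 by ring]
  rw [div_le_div_iff₀ (by linarith) (by linarith)]
  calc gammaRatio (x + 1) ^ 2 * (x - 1 / 4)
      = gammaRatio x ^ 2 * (((x + 1 / 2) / x) ^ 2 * (x - 1 / 4)) := by
        rw [gammaRatio_add_one hx₀]; ring
    _ ≤ gammaRatio x ^ 2 * (x + 1 - 1 / 4) := by gcongr

lemma tendsto_sub_div_sub_atTop (a c : ℝ) :
    Tendsto (fun y : ℝ ↦ (y - a) / (y - c)) atTop (𝓝 1) := by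
  have h : Tendsto (fun y : ℝ ↦ 1 + (c - a) / (y - c)) atTop (𝓝 (1 + 0)) :=
    tendsto_const_nhds.add <| tendsto_const_nhds.div_atTop <|
      tendsto_atTop_add_const_right _ (-c) tendsto_id
  rw [add_zero] at h
  refine h.congr' ?_
  filter_upwards [eventually_gt_atTop c] with y hy
  rw [one_add_div (sub_pos.2 hy).ne', sub_add_sub_cancel]

lemma tendsto_sq_gammaRatio_div_sub (c : ℝ) :
    Tendsto (fun y ↦ gammaRatio y ^ 2 / (y - c)) atTop (𝓝 1) := by
  refine tendsto_of_tendsto_of_tendsto_of_le_of_le' (tendsto_sub_div_sub_atTop (1 / 2) c)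
    (tendsto_sub_div_sub_atTop 0 c) ?_ ?_ <;>
    filter_upwards [eventually_gt_atTop 0, eventually_ge_atTop c] with y hy hc
  · exact div_le_div_of_nonneg_right (sub_half_le_sq_gammaRatio hy) (sub_nonneg.2 hc)
  · rw [sub_zero]
    exact div_le_div_of_nonneg_right (sq_gammaRatio_le hy) (sub_nonneg.2 hc)

variable (x) in
lemma sub_quarter_le_sq_gammaRatio : x - 1 / 4 ≤ gammaRatio x ^ 2 := by
  rcases le_or_gt x (1 / 4) with hsmall | hlarge
  · exact (sub_nonpos.2 hsmall).trans (sq_nonneg _)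
  have hanti : Antitone fun n : ℕ ↦ gammaRatio (x + n) ^ 2 / (x + n - 1 / 4) := by
    refine antitone_nat_of_succ_le fun n ↦ ?_
    have hn : 1 / 4 < x + n := by have : (0 : ℝ) ≤ n := n.cast_nonneg; linarith
    simpa only [Nat.cast_add, Nat.cast_one, add_assoc] using sq_gammaRatio_add_one_div_le hn
  have hone : 1 ≤ gammaRatio x ^ 2 / (x - 1 / 4) := by
    have hlim := (tendsto_sq_gammaRatio_div_sub (1 / 4)).comp
      (tendsto_atTop_add_const_left _ x tendsto_natCast_atTop_atTop)
    simpa using hanti.le_of_tendsto hlim 0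
  exact (one_le_div (sub_pos.2 hlarge)).1 hone

end GammaRatio

section StdGaussian

open Module Real Set

variable {E : Type*} [NormedAddCommGroup E] [InnerProductSpace ℝ E]

/-- The density of the standard Gaussian measure on a finite-dimensional real inner product space
with respect to the volume. -/
def stdGaussianPDFReal (x : E) : ℝ := (2 * π) ^ (-(finrank ℝ E / 2 : ℝ)) * exp (-‖x‖ ^ 2 / 2)

lemma stdGaussianPDFReal_nonneg (x : E) : 0 ≤ stdGaussianPDFReal x := by
  unfold stdGaussianPDFReal; positivity

lemma continuous_stdGaussianPDFReal : Continuous (stdGaussianPDFReal : E → ℝ) := by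
  unfold stdGaussianPDFReal; fun_prop

variable [FiniteDimensional ℝ E] [MeasurableSpace E] [BorelSpace E]

lemma integral_stdGaussianPDFReal_smul_cexp_inner (t : E) :
    ∫ x, stdGaussianPDFReal x • Complex.exp (inner ℝ x t * Complex.I) =
      Complex.exp (-‖t‖ ^ 2 / 2) := by
  have hfourier := GaussianFourier.integral_cexp_neg_mul_sq_norm_add
    (b := 1 / 2) (by norm_num) Complex.I t
  have hnorm : ((2 * π : ℝ) : ℂ) ^ (-(finrank ℝ E / 2 : ℂ)) *
      (π / (1 / 2)) ^ (finrank ℝ E / 2 : ℂ) = 1 := by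
    have h2π : ((2 * π : ℝ) : ℂ) ≠ 0 := mod_cast two_pi_pos.ne'
    rw [show (π / (1 / 2) : ℂ) = (2 * π : ℝ) by push_cast; ring, ← Complex.cpow_add _ _ h2π,
      neg_add_cancel, Complex.cpow_zero]
  calc ∫ x, stdGaussianPDFReal x • Complex.exp (inner ℝ x t * Complex.I)
      = ((2 * π : ℝ) : ℂ) ^ (-(finrank ℝ E / 2 : ℂ)) *
          ∫ x : E, Complex.exp (-(1 / 2) * ‖x‖ ^ 2 + Complex.I * inner ℝ t x) := by
        rw [← integral_const_mul]
        refine integral_congr_ae (.of_forall fun x ↦ ?_)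
        simp only [stdGaussianPDFReal, Complex.real_smul, real_inner_comm, Complex.exp_add]
        rw [Complex.ofReal_mul, Complex.ofReal_cpow two_pi_pos.le]
        push_cast
        ring_nf
    _ = Complex.exp (-‖t‖ ^ 2 / 2) := by
        rw [hfourier, ← mul_assoc, hnorm, one_mul, Complex.I_sq]
        ring_nf

variable (E) in
lemma integral_stdGaussianPDFReal : ∫ x : E, stdGaussianPDFReal x = 1 := by
  rw [← Complex.ofReal_inj, ← integral_complex_ofReal]
  simpa using integral_stdGaussianPDFReal_smul_cexp_inner (0 : E)

lemma integrable_stdGaussianPDFReal : Integrable (stdGaussianPDFReal : E → ℝ) :=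
  .of_integral_ne_zero (by simp [integral_stdGaussianPDFReal])

lemma integral_withDensity_stdGaussianPDFReal {F : Type*} [NormedAddCommGroup F] [NormedSpace ℝ F]
    (f : E → F) :
    ∫ x, f x ∂volume.withDensity (fun x ↦ ENNReal.ofReal (stdGaussianPDFReal x)) =
      ∫ x, stdGaussianPDFReal x • f x := by
  rw [integral_withDensity_eq_integral_toReal_smul
    continuous_stdGaussianPDFReal.measurable.ennreal_ofReal (by simp)]
  simp only [ENNReal.toReal_ofReal (stdGaussianPDFReal_nonneg _)]

variable (E) in
lemma stdGaussian_eq_withDensity :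
    stdGaussian E = volume.withDensity fun x ↦ ENNReal.ofReal (stdGaussianPDFReal x) := by
  have := isFiniteMeasure_withDensity_ofReal
    (integrable_stdGaussianPDFReal (E := E)).hasFiniteIntegral
  refine Measure.ext_of_charFun (funext fun t ↦ ?_)
  rw [charFun_stdGaussian, charFun_apply, integral_withDensity_stdGaussianPDFReal,
    integral_stdGaussianPDFReal_smul_cexp_inner]

variable [Nontrivial E]

variable (E) in
lemma finrank_mul_volume_real_ball_one :
    finrank ℝ E * volume.real (Metric.ball (0 : E) 1) =
      2 * π ^ (finrank ℝ E / 2 : ℝ) / Gamma (finrank ℝ E / 2) := by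
  have hn : (0 : ℝ) < finrank ℝ E := mod_cast finrank_pos
  have hπ : √π ^ finrank ℝ E = π ^ (finrank ℝ E / 2 : ℝ) := by
    rw [sqrt_eq_rpow, ← rpow_mul_natCast pi_nonneg, one_div_mul_eq_div]
  rw [measureReal_def, InnerProductSpace.volume_ball, ENNReal.ofReal_one, one_pow, one_mul,
    ENNReal.toReal_ofReal (by positivity), Gamma_add_one (by positivity), hπ]
  field_simp

lemma integral_fun_norm_stdGaussian {F : Type*} [NormedAddCommGroup F] [NormedSpace ℝ F]
    (f : ℝ → F) :
    ∫ x, f ‖x‖ ∂stdGaussian E =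
      (2 ^ (1 - finrank ℝ E / 2 : ℝ) / Gamma (finrank ℝ E / 2)) •
        ∫ r in Ioi (0 : ℝ), (r ^ (finrank ℝ E - 1) * exp (-r ^ 2 / 2)) • f r := by
  have hconst : finrank ℝ E * volume.real (Metric.ball (0 : E) 1) *
      (2 * π) ^ (-(finrank ℝ E / 2 : ℝ)) =
      2 ^ (1 - finrank ℝ E / 2 : ℝ) / Gamma (finrank ℝ E / 2) := by
    rw [finrank_mul_volume_real_ball_one, mul_rpow zero_le_two pi_nonneg, rpow_neg pi_nonneg,
      sub_eq_add_neg, rpow_add two_pos, rpow_one]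
    field_simp
  rw [stdGaussian_eq_withDensity, integral_withDensity_stdGaussianPDFReal]
  simp only [stdGaussianPDFReal]
  rw [integral_fun_norm_addHaar volume
      fun r ↦ ((2 * π) ^ (-(finrank ℝ E / 2 : ℝ)) * exp (-r ^ 2 / 2)) • f r, ← hconst]
  simp only [mul_smul, smul_comm _ ((2 * π) ^ (-(finrank ℝ E / 2 : ℝ)) : ℝ), integral_smul,
    Nat.cast_smul_eq_nsmul]

lemma integral_norm_rpow_stdGaussian {q : ℝ} (hq : -finrank ℝ E < q) :
    ∫ x, ‖x‖ ^ q ∂stdGaussian E =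
      2 ^ (q / 2) * (Gamma ((finrank ℝ E + q) / 2) / Gamma (finrank ℝ E / 2)) := by
  have hradial : ∫ r in Ioi (0 : ℝ), (r ^ (finrank ℝ E - 1) * exp (-r ^ 2 / 2)) • r ^ q =
      2 ^ ((finrank ℝ E + q) / 2 - 1) * Gamma ((finrank ℝ E + q) / 2) := by
    calc _ = ∫ r in Ioi (0 : ℝ), r ^ (finrank ℝ E + q - 1) * exp (-(1 / 2) * r ^ (2 : ℝ)) := by
          refine setIntegral_congr_fun measurableSet_Ioi fun r (hr : 0 < r) ↦ ?_
          have hpow : r ^ (finrank ℝ E + q - 1) = r ^ (finrank ℝ E - 1) * r ^ q := by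
            rw [← rpow_natCast, ← rpow_add hr, Nat.cast_sub finrank_pos, Nat.cast_one]
            ring_nf
          simp only [smul_eq_mul, rpow_two, hpow]
          ring_nf
      _ = _ := by
          rw [integral_rpow_mul_exp_neg_mul_rpow two_pos (by linarith) one_half_pos,
            sub_add_cancel, one_div, inv_rpow zero_le_two, ← rpow_neg zero_le_two,
            rpow_sub_one two_ne_zero]
          ring_nf
  rw [integral_fun_norm_stdGaussian (· ^ q), hradial, smul_eq_mul, div_mul_eq_mul_div,
    ← mul_assoc, ← rpow_add two_pos, mul_div_assoc]
  ring_nf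

variable (E)

lemma integral_norm_stdGaussian :
    ∫ x, ‖x‖ ∂stdGaussian E = √2 * gammaRatio (finrank ℝ E / 2) := by
  have hn : (0 : ℝ) < finrank ℝ E := mod_cast finrank_pos
  have h := integral_norm_rpow_stdGaussian (E := E) (q := 1) (by linarith)
  simpa [gammaRatio, sqrt_eq_rpow, add_div] using h

lemma integral_norm_sq_stdGaussian : ∫ x, ‖x‖ ^ 2 ∂stdGaussian E = finrank ℝ E := by
  have hn : (0 : ℝ) < finrank ℝ E := mod_cast finrank_pos
  have h := integral_norm_rpow_stdGaussian (E := E) (q := 2) (by linarith)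
  simp only [rpow_two] at h
  rw [h, add_div, div_self two_ne_zero, Gamma_add_one (by positivity), rpow_one,
    mul_div_cancel_right₀ _ (Gamma_pos_of_pos (by positivity)).ne', mul_div_cancel₀ _ two_ne_zero]

lemma variance_norm_stdGaussian :
    Var[fun x ↦ ‖x‖; stdGaussian E] = finrank ℝ E - 2 * gammaRatio (finrank ℝ E / 2) ^ 2 := by
  have hmem : MemLp (fun x : E ↦ ‖x‖) 2 (stdGaussian E) := IsGaussian.memLp_two_id.norm
  rw [variance_eq_sub hmem]
  simp only [Pi.pow_apply, integral_norm_sq_stdGaussian, integral_norm_stdGaussian, mul_pow,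
    sq_sqrt zero_le_two]

lemma variance_norm_stdGaussian_le : Var[fun x ↦ ‖x‖; stdGaussian E] ≤ 1 / 2 := by
  rw [variance_norm_stdGaussian]
  linarith [sub_quarter_le_sq_gammaRatio (finrank ℝ E / 2)]

end StdGaussian

section Pi

open Real WithLp
open scoped NNReal

variable {ι : Type*} [Fintype ι]

lemma map_toLp_pi_gaussianReal (v : ℝ≥0) :
    (Measure.pi fun _ : ι ↦ gaussianReal 0 v).map (toLp 2) =
      (stdGaussian (EuclideanSpace ℝ ι)).map (√(v : ℝ) • ·) := by
  refine Measure.ext_of_charFun (E := EuclideanSpace ℝ ι) (funext fun t ↦ ?_)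
  rw [charFun_pi, charFun_map_smul, charFun_stdGaussian]
  simp only [charFun_gaussianReal, Complex.ofReal_zero, mul_zero, zero_mul, zero_sub,
    ← Complex.exp_sum, Finset.sum_neg_distrib, ← Finset.sum_div, ← Finset.mul_sum]
  rw [← Complex.ofReal_pow, norm_smul, mul_pow, norm_eq_abs, sq_abs, sq_sqrt v.coe_nonneg,
    EuclideanSpace.real_norm_sq_eq]
  push_cast
  ring_nf

lemma variance_sqrt_sum_sq_pi_gaussianReal (v : ℝ≥0) :
    Var[fun w : ι → ℝ ↦ √(∑ j, w j ^ 2); Measure.pi fun _ ↦ gaussianReal 0 v] =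
      v * Var[fun x ↦ ‖x‖; stdGaussian (EuclideanSpace ℝ ι)] := by
  calc _ = Var[(fun x : EuclideanSpace ℝ ι ↦ ‖x‖) ∘ toLp 2;
        Measure.pi fun _ : ι ↦ gaussianReal 0 v] := by
        simp only [Function.comp_def, EuclideanSpace.norm_eq, Real.norm_eq_abs, sq_abs]
    _ = Var[(fun x ↦ ‖x‖) ∘ (√(v : ℝ) • ·); stdGaussian (EuclideanSpace ℝ ι)] := by
        rw [← variance_map (by fun_prop) (by fun_prop), map_toLp_pi_gaussianReal,
          variance_map (by fun_prop) (by fun_prop)]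
    _ = v * Var[fun x ↦ ‖x‖; stdGaussian (EuclideanSpace ℝ ι)] := by
        simp only [Function.comp_def, norm_smul, variance_const_mul, norm_eq_abs, sq_abs,
          sq_sqrt v.coe_nonneg]

end Pi

theorem gaussian_norm_variance_bound_general {ι : Type*} [Fintype ι] [Nonempty ι] (v : NNReal) :
    (∀ x : ℝ, x - 2 * (Real.Gamma ((x + 1) / 2) / Real.Gamma (x / 2)) ^ 2 ≤ 1 / 2) ∧
    variance (fun w : ι → ℝ => Real.sqrt (∑ j, w j ^ 2)) (Measure.pi fun _ => gaussianReal 0 v)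
      = v * ((Fintype.card ι : ℝ) - 2 * (Real.Gamma (((Fintype.card ι : ℝ) + 1) / 2)) ^ 2 /
          (Real.Gamma ((Fintype.card ι : ℝ) / 2)) ^ 2) ∧
    variance (fun w : ι → ℝ => Real.sqrt (∑ j, w j ^ 2)) (Measure.pi fun _ => gaussianReal 0 v)
      ≤ v / 2 := by
  refine ⟨fun x ↦ ?_, ?_, ?_⟩
  · rw [← gammaRatio_half]
    linarith [sub_quarter_le_sq_gammaRatio (x / 2)]
  · rw [variance_sqrt_sum_sq_pi_gaussianReal, variance_norm_stdGaussian, finrank_euclideanSpace,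
      gammaRatio_half, div_pow, mul_div_assoc]
  · rw [variance_sqrt_sum_sq_pi_gaussianReal, div_eq_mul_one_div]
    gcongr
    exact variance_norm_stdGaussian_le _

/-- **Variance bound for the norm of a Gaussian vector.**
For every positive integer `d`, `d − 2 (Γ((d+1)/2)/Γ(d/2))² ≤ 1/2`; equivalently,
if `w ∈ ℝ^d` has i.i.d. `N(0, 1/d)` coordinates, then
`Var(‖w‖₂) = (1/d)(d − 2 Γ((d+1)/2)²/Γ(d/2)²) ≤ 1/(2d)`. -/
theorem gaussian_norm_variance_bound (d : ℕ) (hd : 0 < d) :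
    (d : ℝ) - 2 * (Real.Gamma (((d : ℝ) + 1) / 2) / Real.Gamma ((d : ℝ) / 2)) ^ 2 ≤ 1 / 2 ∧
    variance (fun w : Fin d → ℝ => Real.sqrt (∑ j, w j ^ 2)) (gaussianVec d)
      = (1 / d) * ((d : ℝ)
          - 2 * (Real.Gamma (((d : ℝ) + 1) / 2)) ^ 2 / (Real.Gamma ((d : ℝ) / 2)) ^ 2) ∧
    variance (fun w : Fin d → ℝ => Real.sqrt (∑ j, w j ^ 2)) (gaussianVec d)
      ≤ 1 / (2 * d) := by
  have : NeZero d := ⟨hd.ne'⟩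
  obtain ⟨hΓ, hvar, hle⟩ := gaussian_norm_variance_bound_general (ι := Fin d) (d : NNReal)⁻¹
  exact ⟨hΓ d, by simpa [gaussianVec] using hvar,
    by simpa [gaussianVec, div_eq_mul_inv, mul_comm] using hle⟩

end
end
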